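/- arXiv:1905.06408 — 5 statements merged into one kernel-verified Lean document; each statement's English description precedes it below -/
import Mathlib

section
/- Multivariate Faà di Bruno formula: Let n be a positive integer, V ⊂ ℝ^d and U ⊂ ℝ^e open sets, f : V → ℝ and g : U → V both C^n maps. Then for every x ∈ U and every multi-index ν ∈ ℕ^e with |ν| = n, (f ∘ g)^{(ν)}(x) = Σ_{1 ≤ |λ| ≤ n} f^{(λ)}(g(x)) · Σ_{s=1}^{n} Σ_{(k_1,…,k_s,l_1,…,l_s) ∈ p_s(ν,λ)} ν! · Π_{j=1}^{s} (g^{(l_j)}(x))^{k_j} / (k_j! · (l_j!)^{|k_j|}), where p_s(ν,λ) is the set of all tuples k_1,…,k_s ∈ ℕ^d with |k_i| > 0 and l_1,…,l_s ∈ ℕ^e with 0 ≺ l_1 ≺ … ≺ l_s such that Σ_{i=1}^{s} k_i = λ and Σ_{i=1}^{s} |k_i| l_i = ν. -/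
/-!
A polynomial-valued form of Taylor expansion reduces the formula to algebra. Let `T_x F` be the
Taylor polynomial of order `n` of `F` at `x`, a polynomial in the increment. The formula says that
the coefficient of `X ^ ν` in `T_x (f ∘ g)` equals the one in the composed polynomial
`Q_x = T_{g x} f (T_x g - g x)` (`compPoly`), with the latter coefficient written out.

*Equality of coefficients* (`coeff_taylorPoly_comp`). Up to degree `n`, a Taylor polynomial is
characterised by its constant term and by the fact that differentiating its coefficients in the
base point is the same as differentiating it formally
(`hasCoeffDeriv_taylorPoly`; this uses the symmetry of iterated derivatives, `dirDeriv_perm`).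
The polynomials `Q_x` have this property as well (`hasCoeffDeriv_compPoly`): moving the base point
`g x` of the outer polynomial contributes `∑ i, ∂_j g_i(x) (∂_i T_{g x} f)(T_x g - g x)`, and this
cancels the contribution of the subtracted constants `g x`. Induction on the degree concludes; no
remainder estimates are needed.

*Expansion* (`coeff_compPoly`, `sum_expansionIdx_eq`). The multinomial theorem expresses the
coefficient as a sum over families of multiplicities `K i l`, the number of times the monomial
`X ^ l` is chosen from the `i`-th component. Listing the multi-indices `l` with a nonzero
multiplicity in increasing order as `l_1 ≺ ⋯ ≺ l_s` and setting `k_j = (K i l_j)_i` identifies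
these families with the elements of the sets `p_s(ν, λ)`.
-/

open Set

noncomputable section

/-- The list of coordinate directions (with multiplicities) associated to a
multi-index `ν ∈ ℕ^d`. -/
def mDirs {d : ℕ} (ν : Fin d → ℕ) : List (Fin d → ℝ) :=
  (List.finRange d).flatMap fun i => List.replicate (ν i) (Pi.single i 1)

/-- The partial derivative `f^{(ν)}` of `f : ℝ^d → ℝ` (computed within the set `U`) at `x`,
realized as the iterated derivative of order `|ν|` in the coordinate directions given by `ν`. -/
def pderivW {d : ℕ} (U : Set (Fin d → ℝ)) (f : (Fin d → ℝ) → ℝ) (ν : Fin d → ℕ)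
    (x : Fin d → ℝ) : ℝ :=
  iteratedFDerivWithin ℝ (∑ i, ν i) f U x (fun j => (mDirs ν).getD (j : ℕ) 0)

/-- `l` comes lexicographically before `l'`. -/
def lexBefore {e : ℕ} (l l' : Fin e → ℕ) : Prop :=
  ∃ i : Fin e, (∀ j : Fin e, j < i → l j = l' j) ∧ l i < l' i

/-- The ordering `≺` on multi-indices: `l ≺ l'` iff `|l| < |l'|`, or `|l| = |l'|` and `l`
comes lexicographically before `l'`. -/
def mIdxLT {e : ℕ} (l l' : Fin e → ℕ) : Prop :=
  (∑ i, l i) < (∑ i, l' i) ∨ ((∑ i, l i) = (∑ i, l' i) ∧ lexBefore l l')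

/-- The set `p_s(ν,λ)` of all tuples `(k_1,…,k_s,l_1,…,l_s)` with `k_i ∈ ℕ^d`, `|k_i| > 0`,
`l_i ∈ ℕ^e`, `0 ≺ l_1 ≺ ⋯ ≺ l_s`, `Σ_i k_i = λ` and `Σ_i |k_i|·l_i = ν`. -/
def psSet (d e s : ℕ) (ν : Fin e → ℕ) (lam : Fin d → ℕ) :
    Set ((Fin s → Fin d → ℕ) × (Fin s → Fin e → ℕ)) :=
  {p | (∀ i, 0 < ∑ j, p.1 i j) ∧
       (∀ i, mIdxLT 0 (p.2 i)) ∧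
       (∀ i i' : Fin s, i < i' → mIdxLT (p.2 i) (p.2 i')) ∧
       (∀ j, (∑ i, p.1 i j) = lam j) ∧
       (∀ j, (∑ i, (∑ j', p.1 i j') * p.2 i j) = ν j)}

/-! ### Symmetry of partial derivatives -/

lemma mDirs_length {d : ℕ} (ν : Fin d → ℕ) : (mDirs ν).length = ∑ i, ν i := by
  simp [mDirs, List.length_flatMap, Fin.sum_univ_def]

lemma mDirs_add_single_perm {d : ℕ} (ν : Fin d → ℕ) (j : Fin d) :
    (mDirs (ν + Pi.single j 1)).Perm (Pi.single j 1 :: mDirs ν) := by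
  have key : ∀ ν : Fin d → ℕ, ((mDirs ν : List (Fin d → ℝ)) : Multiset (Fin d → ℝ)) =
      ∑ i, Multiset.replicate (ν i) (Pi.single i 1) := by
    intro ν
    rw [Fin.sum_univ_def, mDirs]
    induction List.finRange d with
    | nil => simp
    | cons a l ih => simp [← ih, ← Multiset.coe_add, Multiset.coe_replicate]
  rw [← Multiset.coe_eq_coe, ← Multiset.cons_coe, key, key, ← Multiset.singleton_add]
  have : ∀ i, Multiset.replicate ((ν + Pi.single j 1 : Fin d → ℕ) i) (Pi.single i 1 : Fin d → ℝ) =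
      (if i = j then {Pi.single j 1} else 0) + Multiset.replicate (ν i) (Pi.single i 1) := by
    intro i
    by_cases h : i = j
    · subst h; simp
    · simp [h]
  simp only [this, Finset.sum_add_distrib]
  simp

/-- The iterated derivative of `F` within `U` in the directions listed in `l`, the head of the
list being the direction differentiated last. -/
def dirDeriv {d : ℕ} (U : Set (Fin d → ℝ)) (F : (Fin d → ℝ) → ℝ) (l : List (Fin d → ℝ))
    (x : Fin d → ℝ) : ℝ :=
  iteratedFDerivWithin ℝ l.length F U x (fun j => l.getD (j : ℕ) 0)

lemma pderivW_eq_dirDeriv {d : ℕ} (U : Set (Fin d → ℝ)) (F : (Fin d → ℝ) → ℝ) (ν : Fin d → ℕ) :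
    pderivW U F ν = dirDeriv U F (mDirs ν) := by
  funext x
  have : ∀ k, k = (mDirs ν).length →
      iteratedFDerivWithin ℝ k F U x (fun j => (mDirs ν).getD (j : ℕ) 0) =
        dirDeriv U F (mDirs ν) x := by
    rintro k rfl; rfl
  exact this _ (mDirs_length ν).symm

lemma pderivW_zero {d : ℕ} (U : Set (Fin d → ℝ)) (F : (Fin d → ℝ) → ℝ) (x : Fin d → ℝ) :
    pderivW U F 0 x = F x := by
  have h : mDirs (0 : Fin d → ℕ) = [] := by simp [mDirs]
  rw [pderivW_eq_dirDeriv, h]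
  simp [dirDeriv]

lemma contDiffAt_dirDeriv {d : ℕ} {U : Set (Fin d → ℝ)} (hU : IsOpen U)
    {F : (Fin d → ℝ) → ℝ} {N : ℕ} (hF : ContDiffOn ℝ N F U) {x : Fin d → ℝ} (hx : x ∈ U)
    (l : List (Fin d → ℝ)) {m : ℕ} (hl : m + l.length ≤ N) :
    ContDiffAt ℝ m (dirDeriv U F l) x := by
  have h : ContDiffAt ℝ m (iteratedFDerivWithin ℝ l.length F U) x :=
    ((hF x hx).iteratedFDerivWithin_right hU.uniqueDiffOn (by exact_mod_cast hl) hx).contDiffAt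
      (hU.mem_nhds hx)
  exact (ContinuousMultilinearMap.apply ℝ (fun _ : Fin l.length => Fin d → ℝ) ℝ
    (fun j => l.getD (j : ℕ) 0)).contDiff.contDiffAt.comp x h

lemma fderiv_dirDeriv {d : ℕ} {U : Set (Fin d → ℝ)} (hU : IsOpen U)
    {F : (Fin d → ℝ) → ℝ} {N : ℕ} (hF : ContDiffOn ℝ N F U) {x : Fin d → ℝ} (hx : x ∈ U)
    (l : List (Fin d → ℝ)) (hl : l.length < N) (v : Fin d → ℝ) :
    fderiv ℝ (dirDeriv U F l) x v = dirDeriv U F (v :: l) x := by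
  have hd : DifferentiableAt ℝ (iteratedFDerivWithin ℝ l.length F U) x :=
    (hF.differentiableOn_iteratedFDerivWithin (by exact_mod_cast hl)
      hU.uniqueDiffOn).differentiableAt (hU.mem_nhds hx)
  have h1 : HasFDerivAt (dirDeriv U F l) _ x :=
    (ContinuousMultilinearMap.apply ℝ (fun _ : Fin l.length => Fin d → ℝ) ℝ
      (fun j => l.getD (j : ℕ) 0)).hasFDerivAt.comp x hd.hasFDerivAt
  rw [h1.fderiv]
  change _ = iteratedFDerivWithin ℝ (l.length + 1) F U x (fun j => (v :: l).getD (j : ℕ) 0)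
  rw [iteratedFDerivWithin_succ_apply_left, fderivWithin_of_isOpen hU hx]
  rfl

/-- Symmetry of iterated derivatives: adjacent directions are swapped by the symmetry of the
second derivative. -/
lemma dirDeriv_perm {d : ℕ} {U : Set (Fin d → ℝ)} (hU : IsOpen U)
    {F : (Fin d → ℝ) → ℝ} {N : ℕ} (hF : ContDiffOn ℝ N F U)
    {l l' : List (Fin d → ℝ)} (hp : l.Perm l') :
    l.length ≤ N → ∀ x ∈ U, dirDeriv U F l x = dirDeriv U F l' x := by
  induction hp with
  | nil => intros; rfl
  | @cons a l₁ l₂ h ih =>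
    intro hN x hx
    have hlen := h.length_eq
    simp only [List.length_cons] at hN
    rw [← fderiv_dirDeriv hU hF hx _ (by omega), ← fderiv_dirDeriv hU hF hx _ (by omega)]
    have : dirDeriv U F l₁ =ᶠ[nhds x] dirDeriv U F l₂ := by
      filter_upwards [hU.mem_nhds hx] with y hy using ih (by omega) y hy
    rw [this.fderiv_eq]
  | swap a b l =>
    intro hN x hx
    simp only [List.length_cons] at hN
    have hc : ContDiffAt ℝ (2 : ℕ) (dirDeriv U F l) x :=
      contDiffAt_dirDeriv hU hF hx l (by omega)
    have hdd : DifferentiableAt ℝ (fderiv ℝ (dirDeriv U F l)) x :=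
      (hc.fderiv_right (m := 1) (by norm_num)).differentiableAt (by norm_num)
    have key : ∀ a b : Fin d → ℝ, dirDeriv U F (a :: b :: l) x =
        fderiv ℝ (fderiv ℝ (dirDeriv U F l)) x a b := by
      intro a b
      rw [← fderiv_dirDeriv hU hF hx _ (by simp; omega)]
      have : dirDeriv U F (b :: l) =ᶠ[nhds x] fun y => fderiv ℝ (dirDeriv U F l) y b := by
        filter_upwards [hU.mem_nhds hx] with y hy
        rw [fderiv_dirDeriv hU hF hy _ (by omega)]
      rw [this.fderiv_eq, fderiv_clm_apply hdd (differentiableAt_const b)]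
      simp
    rw [key, key]
    exact (hc.isSymmSndFDerivAt (by simp)).eq _ _
  | trans h₁ h₂ ih₁ ih₂ =>
    intro hN x hx
    rw [ih₁ hN x hx, ih₂ (h₁.length_eq ▸ hN) x hx]

lemma hasFDerivAt_pderivW {d : ℕ} {U : Set (Fin d → ℝ)} (hU : IsOpen U)
    {F : (Fin d → ℝ) → ℝ} {N : ℕ} (hF : ContDiffOn ℝ N F U) {x : Fin d → ℝ} (hx : x ∈ U)
    (ν : Fin d → ℕ) (hν : ∑ i, ν i < N) :
    HasFDerivAt (pderivW U F ν)
      (∑ j, pderivW U F (ν + Pi.single j 1) x •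
        (ContinuousLinearMap.proj j : (Fin d → ℝ) →L[ℝ] ℝ)) x := by
  have hlen := mDirs_length ν
  have hd : DifferentiableAt ℝ (dirDeriv U F (mDirs ν)) x :=
    (contDiffAt_dirDeriv hU hF hx (mDirs ν) (m := 1) (by omega)).differentiableAt (by simp)
  have h2 : ∀ j : Fin d, pderivW U F (ν + Pi.single j 1) x =
      fderiv ℝ (dirDeriv U F (mDirs ν)) x (Pi.single j 1) := by
    intro j
    rw [fderiv_dirDeriv hU hF hx _ (by omega), pderivW_eq_dirDeriv]
    refine dirDeriv_perm hU hF (mDirs_add_single_perm ν j) ?_ x hx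
    rw [mDirs_length]
    simp [Finset.sum_add_distrib]; omega
  have h3 : (∑ j, pderivW U F (ν + Pi.single j 1) x •
      (ContinuousLinearMap.proj j : (Fin d → ℝ) →L[ℝ] ℝ)) =
      fderiv ℝ (dirDeriv U F (mDirs ν)) x := by
    refine ContinuousLinearMap.ext fun v => ?_
    conv_rhs => rw [pi_eq_sum_univ' v]
    simp [map_sum, h2, mul_comm]
  rw [h3, pderivW_eq_dirDeriv]
  exact hd.hasFDerivAt

/-! ### Taylor polynomials and curves of polynomials -/

open MvPolynomial

/-- The finite set of multi-indices of degree less than `N`. -/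
def degIdx (d N : ℕ) : Finset (Fin d →₀ ℕ) :=
  (Finset.range N).biUnion fun k => Finset.finsuppAntidiag Finset.univ k

lemma mem_degIdx {d N : ℕ} {m : Fin d →₀ ℕ} : m ∈ degIdx d N ↔ ∑ i, m i < N := by
  simp [degIdx]

/-- The Taylor polynomial of order `n` of `F` at `x`, as a polynomial in the increment. -/
def taylorPoly {d : ℕ} (U : Set (Fin d → ℝ)) (F : (Fin d → ℝ) → ℝ) (n : ℕ)
    (x : Fin d → ℝ) : MvPolynomial (Fin d) ℝ :=
  ∑ l ∈ degIdx d (n + 1), monomial l (pderivW U F l x / ((∏ i, (l i).factorial : ℕ) : ℝ))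

lemma coeff_taylorPoly {d : ℕ} (U : Set (Fin d → ℝ)) (F : (Fin d → ℝ) → ℝ) (n : ℕ)
    (x : Fin d → ℝ) {m : Fin d →₀ ℕ} (hm : ∑ i, m i ≤ n) :
    coeff m (taylorPoly U F n x) = pderivW U F m x / ((∏ i, (m i).factorial : ℕ) : ℝ) := by
  classical
  rw [taylorPoly, coeff_sum, Finset.sum_eq_single m]
  · simp
  · intro b _ hb; simp [coeff_monomial, hb]
  · intro h; exact absurd (mem_degIdx.2 (by omega)) h

/-- `Q` is the derivative at `0` of the curve of polynomials `P`, as far as coefficients of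
degree less than `N` are concerned. -/
def HasCoeffDeriv {d : ℕ} (N : ℕ) (P : ℝ → MvPolynomial (Fin d) ℝ)
    (Q : MvPolynomial (Fin d) ℝ) : Prop :=
  ∀ m : Fin d →₀ ℕ, ∑ i, m i < N → HasDerivAt (fun t => coeff m (P t)) (coeff m Q) 0

lemma HasCoeffDeriv.mul {d N : ℕ} {P Q : ℝ → MvPolynomial (Fin d) ℝ}
    {P' Q' : MvPolynomial (Fin d) ℝ} (hP : HasCoeffDeriv N P P') (hQ : HasCoeffDeriv N Q Q') :
    HasCoeffDeriv N (fun t => P t * Q t) (P' * Q 0 + P 0 * Q') := by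
  intro m hm
  simp only [coeff_mul, coeff_add, ← Finset.sum_add_distrib]
  refine HasDerivAt.fun_sum fun ab hab => ?_
  have hab' := Finset.HasAntidiagonal.mem_antidiagonal.1 hab
  have hs : ∑ i, ab.1 i + ∑ i, ab.2 i = ∑ i, m i := by
    rw [← hab', ← Finset.sum_add_distrib]; simp
  exact (hP ab.1 (by omega)).mul (hQ ab.2 (by omega))

lemma HasCoeffDeriv.add {d N : ℕ} {P Q : ℝ → MvPolynomial (Fin d) ℝ}
    {P' Q' : MvPolynomial (Fin d) ℝ} (hP : HasCoeffDeriv N P P') (hQ : HasCoeffDeriv N Q Q') :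
    HasCoeffDeriv N (fun t => P t + Q t) (P' + Q') := by
  intro m hm
  simp only [coeff_add]
  exact (hP m hm).add (hQ m hm)

lemma HasCoeffDeriv.aeval {d e N : ℕ} {G : Fin d → ℝ → MvPolynomial (Fin e) ℝ}
    {G' : Fin d → MvPolynomial (Fin e) ℝ} (hG : ∀ i, HasCoeffDeriv N (G i) (G' i))
    (q : MvPolynomial (Fin d) ℝ) :
    HasCoeffDeriv N (fun t => MvPolynomial.aeval (fun i => G i t) q)
      (∑ i, MvPolynomial.aeval (fun i => G i 0) (pderiv i q) * G' i) := by
  classical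
  induction q using MvPolynomial.induction_on with
  | C a =>
    intro m _
    simpa using hasDerivAt_const (0 : ℝ) (coeff m (C a : MvPolynomial (Fin e) ℝ))
  | add p q hp hq =>
    simpa [add_mul, Finset.sum_add_distrib] using hp.add hq
  | mul_X p i hp =>
    convert hp.mul (hG i) using 1
    · simp
    · simp only [pderiv_mul, map_add, map_mul, aeval_X, add_mul, Finset.sum_add_distrib,
        Finset.sum_mul]
      congr 1
      · exact Finset.sum_congr rfl fun j _ => by ring
      · rw [Finset.sum_eq_single i]
        · simp
        · intro j _ hj; simp [pderiv_X_of_ne hj.symm]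
        · simp

lemma pderiv_aeval_eq {d e : ℕ} (G : Fin d → MvPolynomial (Fin e) ℝ) (j : Fin e)
    (q : MvPolynomial (Fin d) ℝ) :
    pderiv j (MvPolynomial.aeval G q) =
      ∑ i, MvPolynomial.aeval G (pderiv i q) * pderiv j (G i) := by
  classical
  induction q using MvPolynomial.induction_on with
  | C a => simp
  | add p q hp hq => simp only [map_add, add_mul, Finset.sum_add_distrib, hp, hq]
  | mul_X p i hp =>
    simp only [pderiv_mul, map_add, map_mul, aeval_X, add_mul, Finset.sum_add_distrib, hp,
      Finset.sum_mul]
    congr 1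
    · exact Finset.sum_congr rfl fun j _ => by ring
    · rw [Finset.sum_eq_single i]
      · simp
      · intro j _ hj; simp [pderiv_X_of_ne hj.symm]
      · simp

lemma coeff_mul_eq_zero_of_lt {e a b : ℕ} {P Q : MvPolynomial (Fin e) ℝ}
    (hP : ∀ m : Fin e →₀ ℕ, ∑ i, m i < a → coeff m P = 0)
    (hQ : ∀ m : Fin e →₀ ℕ, ∑ i, m i < b → coeff m Q = 0) :
    ∀ m : Fin e →₀ ℕ, ∑ i, m i < a + b → coeff m (P * Q) = 0 := by
  intro m hm
  rw [coeff_mul]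
  refine Finset.sum_eq_zero fun ab hab => ?_
  have hab' := Finset.HasAntidiagonal.mem_antidiagonal.1 hab
  have hs : ∑ i, ab.1 i + ∑ i, ab.2 i = ∑ i, m i := by
    rw [← hab', ← Finset.sum_add_distrib]; simp
  by_cases h : ∑ i, ab.1 i < a
  · rw [hP _ h, zero_mul]
  · rw [hQ _ (by omega), mul_zero]

/-- Substituting polynomials without constant term does not lower the order of vanishing. -/
lemma coeff_aeval_monomial_eq_zero {d e : ℕ} {G : Fin d → MvPolynomial (Fin e) ℝ}
    (hG : ∀ i, coeff 0 (G i) = 0) (l : Fin d →₀ ℕ) (m : Fin e →₀ ℕ)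
    (hm : ∑ i, m i < ∑ i, l i) : coeff m (MvPolynomial.aeval G (monomial l (1 : ℝ))) = 0 := by
  classical
  have hG1 : ∀ i, ∀ m : Fin e →₀ ℕ, ∑ i, m i < 1 → coeff m (G i) = 0 := by
    intro i m hm
    have : m = 0 := by
      ext j
      have := Finset.single_le_sum (f := fun i => m i) (fun _ _ => Nat.zero_le _)
        (Finset.mem_univ j)
      simp only [Finsupp.coe_zero, Pi.zero_apply]; omega
    rw [this, hG]
  have hpow : ∀ i, ∀ k : ℕ, ∀ m : Fin e →₀ ℕ, ∑ i, m i < k → coeff m (G i ^ k) = 0 := by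
    intro i k
    induction k with
    | zero => intro m hm; omega
    | succ k ih => rw [pow_succ]; exact coeff_mul_eq_zero_of_lt ih (hG1 i)
  have hprod : ∀ s : Finset (Fin d), ∀ m : Fin e →₀ ℕ, ∑ i, m i < ∑ i ∈ s, l i →
      coeff m (∏ i ∈ s, G i ^ l i) = 0 := by
    intro s
    induction s using Finset.induction_on with
    | empty => intro m hm; simp at hm
    | insert a s ha ih =>
      rw [Finset.prod_insert ha, Finset.sum_insert ha]
      exact coeff_mul_eq_zero_of_lt (hpow a _) ih
  rw [aeval_monomial, Finsupp.prod_fintype _ _ (by simp)]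
  simpa using hprod Finset.univ m hm

/-- A linear functional on polynomials that kills the monomials of degree at least `N` is
determined by the coefficients of degree less than `N`. -/
lemma linear_eq_sum_degIdx {d N : ℕ} (φ : MvPolynomial (Fin d) ℝ →ₗ[ℝ] ℝ)
    (hφ : ∀ l : Fin d →₀ ℕ, N ≤ ∑ i, l i → φ (monomial l 1) = 0) (q : MvPolynomial (Fin d) ℝ) :
    φ q = ∑ l ∈ degIdx d N, coeff l q * φ (monomial l 1) := by
  classical
  have h : ∀ l, φ (monomial l (coeff l q)) = coeff l q * φ (monomial l 1) := by
    intro l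
    rw [← smul_eq_mul, ← map_smul, smul_monomial, smul_eq_mul, mul_one]
  conv_lhs => rw [q.as_sum]
  rw [map_sum]
  simp only [h]
  rw [Finset.sum_subset (Finset.subset_union_left (s₂ := degIdx d N)),
    ← Finset.sum_subset (Finset.subset_union_right (s₁ := q.support))]
  · intro l _ hl
    rw [hφ l (by simpa [mem_degIdx] using hl), mul_zero]
  · intro l _ hl
    rw [notMem_support_iff.1 hl, zero_mul]

/-- Product and chain rule for the substitution of moving polynomials without constant term
into a moving polynomial. As there are no constant terms, only finitely many monomials, of degree
less than `N`, matter for each coefficient. -/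
lemma HasCoeffDeriv.aeval_curve {d e N : ℕ} {G : Fin d → ℝ → MvPolynomial (Fin e) ℝ}
    {G' : Fin d → MvPolynomial (Fin e) ℝ} (hG : ∀ i, HasCoeffDeriv N (G i) (G' i))
    (hG0 : ∀ i t, coeff 0 (G i t) = 0)
    {p : ℝ → MvPolynomial (Fin d) ℝ} {p' : MvPolynomial (Fin d) ℝ} (hp : HasCoeffDeriv N p p') :
    HasCoeffDeriv N (fun t => MvPolynomial.aeval (fun i => G i t) (p t))
      (MvPolynomial.aeval (fun i => G i 0) p' +
        ∑ i, MvPolynomial.aeval (fun i => G i 0) (pderiv i (p 0)) * G' i) := by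
  intro m hm
  let φ : ℝ → MvPolynomial (Fin d) ℝ →ₗ[ℝ] ℝ := fun t =>
    (lcoeff ℝ m).comp (MvPolynomial.aeval (fun i => G i t)).toLinearMap
  let ψ : MvPolynomial (Fin d) ℝ →ₗ[ℝ] ℝ :=
    (lcoeff ℝ m).comp (∑ i, (LinearMap.mulRight ℝ (G' i)).comp
      ((MvPolynomial.aeval (fun i => G i 0)).toLinearMap.comp (pderiv i).toLinearMap))
  have hφ : ∀ t q, coeff m (MvPolynomial.aeval (fun i => G i t) q) = φ t q := fun _ _ => rfl
  have hψ : ∀ q, coeff m (∑ i, MvPolynomial.aeval (fun i => G i 0) (pderiv i q) * G' i) = ψ q := by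
    intro q; simp [ψ, lcoeff_apply, coeff_sum]
  have hφ0 : ∀ t, ∀ l : Fin d →₀ ℕ, N ≤ ∑ i, l i → φ t (monomial l 1) = 0 := fun t l hl =>
    (hφ t _).symm.trans (coeff_aeval_monomial_eq_zero (fun i => hG0 i t) l m (by omega))
  have hφψ : ∀ q, HasDerivAt (fun t => φ t q) (ψ q) 0 := fun q => by
    have := HasCoeffDeriv.aeval hG q m hm
    rwa [hψ] at this
  have hψ0 : ∀ l : Fin d →₀ ℕ, N ≤ ∑ i, l i → ψ (monomial l 1) = 0 := fun l hl => by
    have h := hφψ (monomial l 1)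
    simp only [hφ0 _ l hl] at h
    exact h.unique (hasDerivAt_const _ _)
  rw [coeff_add, hφ, hψ]
  simp only [hφ]
  rw [linear_eq_sum_degIdx ψ hψ0, linear_eq_sum_degIdx (φ 0) (hφ0 0), ← Finset.sum_add_distrib]
  have : (fun t => φ t (p t)) =
      fun t => ∑ l ∈ degIdx d N, coeff l (p t) * φ t (monomial l 1) := by
    funext t; exact linear_eq_sum_degIdx (φ t) (hφ0 t) _
  rw [this]
  exact HasDerivAt.fun_sum fun l hl => (hp l (mem_degIdx.1 hl)).mul (hφψ _)

/-! ### The composition of Taylor polynomials -/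

/-- Moving the base point of a Taylor polynomial with velocity `v` amounts to differentiating it
formally in the direction `v`. -/
lemma hasCoeffDeriv_taylorPoly {d n : ℕ} {V : Set (Fin d → ℝ)} (hV : IsOpen V)
    {f : (Fin d → ℝ) → ℝ} (hf : ContDiffOn ℝ n f V) {γ : ℝ → Fin d → ℝ} {v : Fin d → ℝ}
    (hγ : HasDerivAt γ v 0) (hγ0 : γ 0 ∈ V) :
    HasCoeffDeriv n (fun t => taylorPoly V f n (γ t))
      (∑ i, C (v i) * pderiv i (taylorPoly V f n (γ 0))) := by
  classical
  intro m hm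
  have h1 := ((hasFDerivAt_pderivW hV hf hγ0 m hm).comp_hasDerivAt (0 : ℝ) hγ).div_const
    ((∏ i, (m i).factorial : ℕ) : ℝ)
  have h2 : (fun t => coeff m (taylorPoly V f n (γ t))) = fun t =>
      pderivW V f m (γ t) / ((∏ i, (m i).factorial : ℕ) : ℝ) :=
    funext fun t => coeff_taylorPoly V f n (γ t) hm.le
  rw [h2]
  refine h1.congr_deriv ?_
  symm
  simp only [coeff_sum, coeff_C_mul, coeff_pderiv, sum_apply,
    smul_apply, ContinuousLinearMap.proj_apply, Finset.sum_div, smul_eq_mul]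
  refine Finset.sum_congr rfl fun j _ => ?_
  have hfac : ∏ i, ((m + Finsupp.single j 1 : Fin d →₀ ℕ) i).factorial =
      (m j + 1) * ∏ i, (m i).factorial := by
    rw [← Finset.mul_prod_erase _ _ (Finset.mem_univ j),
      ← Finset.mul_prod_erase Finset.univ (fun i => (m i).factorial) (Finset.mem_univ j),
      ← mul_assoc, ← Nat.factorial_succ]
    congr 1
    · simp
    · refine Finset.prod_congr rfl fun i hi => ?_
      simp [(Finset.ne_of_mem_erase hi).symm]
  have hcoe : ((m + Finsupp.single j 1 : Fin d →₀ ℕ) : Fin d → ℕ) = ⇑m + Pi.single j 1 := by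
    rw [Finsupp.coe_add, Finsupp.single_eq_pi_single]
  rw [coeff_taylorPoly V f n, hfac, hcoe]
  · have h2 : ((∏ i, (m i).factorial : ℕ) : ℝ) ≠ 0 :=
      Nat.cast_ne_zero.2 (Finset.prod_ne_zero_iff.2 fun i _ => Nat.factorial_ne_zero _)
    have h3 : ((m j : ℝ) + 1) ≠ 0 := by positivity
    rw [Nat.cast_mul]; push_cast at h2 ⊢
    field_simp
  · rw [hcoe]; simp [Finset.sum_add_distrib]; omega

/-- The composition of the Taylor polynomial of `f` at `g x` with the increments of the Taylor
polynomials of the components of `g` at `x`. -/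
def compPoly {d e : ℕ} (n : ℕ) (V : Set (Fin d → ℝ)) (U : Set (Fin e → ℝ))
    (f : (Fin d → ℝ) → ℝ) (g : (Fin e → ℝ) → (Fin d → ℝ)) (x : Fin e → ℝ) :
    MvPolynomial (Fin e) ℝ :=
  MvPolynomial.aeval (fun i => taylorPoly U (fun y => g y i) n x - C (g x i))
    (taylorPoly V f n (g x))

lemma coeff_zero_taylorPoly_sub {e : ℕ} (n : ℕ) (U : Set (Fin e → ℝ)) (F : (Fin e → ℝ) → ℝ)
    (x : Fin e → ℝ) : coeff 0 (taylorPoly U F n x - C (F x)) = 0 := by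
  rw [coeff_sub, coeff_taylorPoly _ _ _ _ (by simp)]
  simp [pderivW_zero]

/-- Translating the base point of `compPoly` amounts to differentiating it formally: moving
the base point `g x` of the outer polynomial is compensated by the subtracted constants `g x`. -/
lemma hasCoeffDeriv_compPoly {d e n : ℕ} (hn : 0 < n)
    {V : Set (Fin d → ℝ)} (hV : IsOpen V) {U : Set (Fin e → ℝ)} (hU : IsOpen U)
    {f : (Fin d → ℝ) → ℝ} {g : (Fin e → ℝ) → (Fin d → ℝ)} (hgU : Set.MapsTo g U V)
    (hf : ContDiffOn ℝ n f V) (hg : ContDiffOn ℝ n g U)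
    {x : Fin e → ℝ} (hx : x ∈ U) (j : Fin e) :
    HasCoeffDeriv n (fun t : ℝ => compPoly n V U f g (x + t • Pi.single j 1))
      (pderiv j (compPoly n V U f g x)) := by
  classical
  have hgi : ∀ i, ContDiffOn ℝ n (fun y => g y i) U := fun i => contDiffOn_pi.1 hg i
  have hγ : HasDerivAt (fun t : ℝ => x + t • (Pi.single j 1 : Fin e → ℝ)) (Pi.single j 1) 0 := by
    simpa using ((hasDerivAt_id (0 : ℝ)).smul_const (Pi.single j 1 : Fin e → ℝ)).const_add x
  have hγ0 : x + (0 : ℝ) • (Pi.single j 1 : Fin e → ℝ) = x := by simp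
  let v : Fin d → ℝ := fun i => coeff 0 (pderiv j (taylorPoly U (fun y => g y i) n x))
  have hT : ∀ i, HasCoeffDeriv n
      (fun t : ℝ => taylorPoly U (fun y => g y i) n (x + t • Pi.single j 1))
      (pderiv j (taylorPoly U (fun y => g y i) n x)) := by
    intro i
    have := hasCoeffDeriv_taylorPoly hU (hgi i) hγ (by rwa [hγ0])
    rw [hγ0, Finset.sum_eq_single j] at this
    · simpa using this
    · intro k _ hk; simp [hk]
    · simp
  -- The coefficients of degree `0` in `hT` give the derivative of `g` along the line.
  have hgd : ∀ i, HasDerivAt (fun t : ℝ => g (x + t • Pi.single j 1) i) (v i) 0 := by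
    intro i
    have := hT i 0 (by simpa using hn)
    simp only [coeff_taylorPoly U _ n _ (m := 0) (by simp)] at this
    simpa [pderivW_zero] using this
  have hG : ∀ i, HasCoeffDeriv n
      (fun t : ℝ => taylorPoly U (fun y => g y i) n (x + t • Pi.single j 1) -
        C (g (x + t • Pi.single j 1) i))
      (pderiv j (taylorPoly U (fun y => g y i) n x) - C (v i)) := by
    intro i m hm
    simp only [coeff_sub, coeff_C]
    refine (hT i m hm).sub ?_
    split_ifs
    · exact hgd i
    · exact hasDerivAt_const _ _
  have hp := hasCoeffDeriv_taylorPoly hV hf (γ := fun t : ℝ => g (x + t • Pi.single j 1))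
    (hasDerivAt_pi.2 hgd) (by simpa [hγ0] using hgU hx)
  have h := HasCoeffDeriv.aeval_curve hG (fun i t => coeff_zero_taylorPoly_sub _ _ _ _) hp
  intro m hm
  refine (h m hm).congr_deriv (congrArg (coeff m) (Eq.symm ?_))
  rw [compPoly, pderiv_aeval_eq, hγ0, map_sum, ← Finset.sum_add_distrib]
  refine Finset.sum_congr rfl fun i _ => ?_
  rw [map_mul, algHom_C, algebraMap_eq, Derivation.map_sub, pderiv_C]
  ring

/-- The Taylor coefficients of `f ∘ g` are the coefficients of `compPoly`: they agree in degree
`0`, and satisfy the same recursion under differentiation in the base point. -/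
lemma coeff_taylorPoly_comp {d e n : ℕ} (hn : 0 < n)
    {V : Set (Fin d → ℝ)} (hV : IsOpen V) {U : Set (Fin e → ℝ)} (hU : IsOpen U)
    {f : (Fin d → ℝ) → ℝ} {g : (Fin e → ℝ) → (Fin d → ℝ)} (hgU : Set.MapsTo g U V)
    (hf : ContDiffOn ℝ n f V) (hg : ContDiffOn ℝ n g U) (k : ℕ) :
    ∀ m : Fin e →₀ ℕ, ∑ i, m i = k → k ≤ n → ∀ x ∈ U,
      coeff m (taylorPoly U (fun y => f (g y)) n x) = coeff m (compPoly n V U f g x) := by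
  classical
  have hfg : ContDiffOn ℝ n (fun y => f (g y)) U := hf.comp hg hgU
  induction k with
  | zero =>
    intro m hm _ x hx
    obtain rfl : m = 0 := by
      ext j
      have := Finset.single_le_sum (f := fun i => m i) (fun _ _ => Nat.zero_le _)
        (Finset.mem_univ j)
      simp only [Finsupp.coe_zero, Pi.zero_apply]; omega
    rw [coeff_taylorPoly _ _ _ _ (by simp)]
    have h1 : ∀ l : Fin d →₀ ℕ, 1 ≤ ∑ i, l i →
        ((lcoeff ℝ 0).comp (MvPolynomial.aeval
          (fun i => taylorPoly U (fun y => g y i) n x - C (g x i))).toLinearMap)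
          (monomial l 1) = 0 := fun l hl =>
      coeff_aeval_monomial_eq_zero (fun i => coeff_zero_taylorPoly_sub _ _ _ _) l 0
        (by simpa using Nat.lt_of_succ_le hl)
    have h2 := linear_eq_sum_degIdx _ h1 (taylorPoly V f n (g x))
    have h3 : degIdx d 1 = {0} := by
      ext l
      simp [mem_degIdx, Finsupp.ext_iff]
    rw [h3, Finset.sum_singleton, coeff_taylorPoly _ _ _ _ (by simp)] at h2
    rw [compPoly]
    refine Eq.trans ?_ h2.symm
    simp [pderivW_zero, lcoeff_apply]
  | succ k ih =>
    intro m hm hk x hx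
    obtain ⟨j, hj⟩ : ∃ j, m j ≠ 0 := by
      by_contra! h
      simp [h] at hm
    obtain ⟨m, rfl⟩ : ∃ m', m = m' + Finsupp.single j 1 :=
      ⟨m - Finsupp.single j 1,
        (tsub_add_cancel_of_le (by simpa using Nat.one_le_iff_ne_zero.2 hj)).symm⟩
    have hm' : ∑ i, m i = k := by
      simpa [Finset.sum_add_distrib, Finsupp.single_apply] using hm
    have hγ : HasDerivAt (fun t : ℝ => x + t • (Pi.single j 1 : Fin e → ℝ)) (Pi.single j 1) 0 := by
      simpa using ((hasDerivAt_id (0 : ℝ)).smul_const (Pi.single j 1 : Fin e → ℝ)).const_add x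
    have hγ0 : x + (0 : ℝ) • (Pi.single j 1 : Fin e → ℝ) = x := by simp
    have h1 := hasCoeffDeriv_taylorPoly hU hfg hγ (by rwa [hγ0]) m (by omega)
    rw [hγ0, Finset.sum_eq_single j (by intro i _ hi; simp [hi]) (by simp), Pi.single_eq_same,
      C_1, one_mul] at h1
    have h2 := hasCoeffDeriv_compPoly hn hV hU hgU hf hg hx j m (by omega)
    have hev : (fun t : ℝ => coeff m (taylorPoly U (fun y => f (g y)) n (x + t • Pi.single j 1)))
        =ᶠ[nhds 0] fun t => coeff m (compPoly n V U f g (x + t • Pi.single j 1)) := by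
      have := hγ.continuousAt.preimage_mem_nhds (hU.mem_nhds (by rwa [hγ0]))
      filter_upwards [this] with t ht using ih m hm' (by omega) _ ht
    have h3 := h1.unique (h2.congr_of_eventuallyEq hev)
    rw [coeff_pderiv, coeff_pderiv] at h3
    exact mul_right_cancel₀ (by positivity) h3

/-! ### The multinomial expansion and the ordering of multi-indices -/

/-- The terms `K` of the expansion of `∏ i, (∑ l ∈ L, c i l X ^ l) ^ lam i` contributing to the
coefficient of `X ^ ν`; `K i l` is the number of factors of the `i`-th power in which the summand
with index `l` is chosen. -/
def expansionIdx {d e : ℕ} (L : Finset (Fin e →₀ ℕ)) (lam : Fin d → ℕ) (ν : Fin e →₀ ℕ) :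
    Finset (Fin d → (Fin e →₀ ℕ) → ℕ) :=
  (Fintype.piFinset fun i => Finset.piAntidiag L (lam i)).filter
    fun K => ∑ i, ∑ l ∈ L, K i l • l = ν

lemma mem_expansionIdx {d e : ℕ} {L : Finset (Fin e →₀ ℕ)} {lam : Fin d → ℕ} {ν : Fin e →₀ ℕ}
    {K : Fin d → (Fin e →₀ ℕ) → ℕ} :
    K ∈ expansionIdx L lam ν ↔ (∀ i, ∑ l ∈ L, K i l = lam i) ∧ (∀ i l, K i l ≠ 0 → l ∈ L) ∧
      ∑ i, ∑ l ∈ L, K i l • l = ν := by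
  simp [expansionIdx, Fintype.mem_piFinset, forall_and, and_assoc]

/-- The multinomial theorem, the multinomial coefficients being split into `∏ i, (lam i)!` and the
factors `1 / (K i l)!`. -/
lemma coeff_prod_pow {d e : ℕ} (L : Finset (Fin e →₀ ℕ)) (c : Fin d → (Fin e →₀ ℕ) → ℝ)
    (lam : Fin d → ℕ) (ν : Fin e →₀ ℕ) :
    coeff ν (∏ i, (∑ l ∈ L, monomial l (c i l)) ^ lam i) =
      ((∏ i, (lam i).factorial : ℕ) : ℝ) *
        ∑ K ∈ expansionIdx L lam ν, ∏ l ∈ L, ∏ i, c i l ^ K i l / ((K i l).factorial : ℝ) := by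
  classical
  simp only [Finset.sum_pow_eq_sum_piAntidiag]
  rw [Finset.prod_univ_sum, coeff_sum, expansionIdx, Finset.sum_filter, Finset.mul_sum]
  refine Finset.sum_congr rfl fun K hK => ?_
  have hK' : ∀ i, ∑ l ∈ L, K i l = lam i := fun i =>
    (Finset.mem_piAntidiag.1 (Fintype.mem_piFinset.1 hK i)).1
  have hmon : ∀ i, ∏ l ∈ L, (monomial l (c i l) : MvPolynomial (Fin e) ℝ) ^ K i l =
      monomial (∑ l ∈ L, K i l • l) (∏ l ∈ L, c i l ^ K i l) := by
    intro i
    simp only [monomial_pow]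
    exact (monomial_sum_prod L (fun l => K i l • l) (fun l => c i l ^ K i l)).symm
  have hterm : ∏ i, ((Nat.multinomial L (K i) : MvPolynomial (Fin e) ℝ) *
      ∏ l ∈ L, (monomial l (c i l)) ^ K i l) =
      monomial (∑ i, ∑ l ∈ L, K i l • l)
        (∏ i, ((Nat.multinomial L (K i) : ℝ) * ∏ l ∈ L, c i l ^ K i l)) := by
    rw [monomial_sum_prod]
    refine Finset.prod_congr rfl fun i _ => ?_
    rw [hmon, ← map_natCast C, C_mul_monomial]
  rw [hterm, coeff_monomial]
  split_ifs with h
  · rw [Finset.prod_comm, Nat.cast_prod, ← Finset.prod_mul_distrib]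
    refine Finset.prod_congr rfl fun i _ => ?_
    rw [Finset.prod_div_distrib, ← hK' i, ← Nat.multinomial_spec L (K i)]
    have : ((∏ l ∈ L, (K i l).factorial : ℕ) : ℝ) ≠ 0 :=
      Nat.cast_ne_zero.2 (Finset.prod_ne_zero_iff.2 fun _ _ => Nat.factorial_ne_zero _)
    rw [Nat.cast_mul]
    push_cast at this ⊢
    field_simp
  · rw [mul_zero]

/-- The embedding of multi-indices into a lexicographic product whose order pulls back to `≺`. -/
def idxKey {e : ℕ} (l : Fin e → ℕ) : ℕ ×ₗ Lex (Fin e → ℕ) := toLex (∑ i, l i, toLex l)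

lemma idxKey_injective {e : ℕ} : Function.Injective (idxKey (e := e)) := by
  intro l l' h
  have := congrArg (fun p => (ofLex p).2) h
  exact toLex.injective this

lemma idxKey_lt_iff {e : ℕ} {l l' : Fin e → ℕ} : idxKey l < idxKey l' ↔ mIdxLT l l' := by
  rw [idxKey, idxKey, Prod.Lex.toLex_lt_toLex]
  rfl

lemma exists_enumeration {e : ℕ} (S : Finset (Fin e → ℕ)) :
    ∃ l : Fin S.card → Fin e → ℕ, (∀ i i', i < i' → mIdxLT (l i) (l i')) ∧ Set.range l = S := by
  classical
  have hcard : (S.image idxKey).card = S.card := Finset.card_image_of_injective _ idxKey_injective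
  have hr := Finset.range_orderEmbOfFin (S.image idxKey) hcard
  have hmem : ∀ i, ∃ l ∈ S, idxKey l = (S.image idxKey).orderEmbOfFin hcard i := fun i =>
    Finset.mem_image.1 (Finset.orderEmbOfFin_mem _ hcard i)
  choose l hlS hl using hmem
  refine ⟨l, fun i i' h => ?_, ?_⟩
  · rw [← idxKey_lt_iff, hl, hl]
    exact ((S.image idxKey).orderEmbOfFin hcard).strictMono h
  · ext a
    constructor
    · rintro ⟨i, rfl⟩; exact hlS i
    · intro ha
      have : idxKey a ∈ Set.range ((S.image idxKey).orderEmbOfFin hcard) := by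
        rw [hr]; exact Finset.mem_coe.2 (Finset.mem_image_of_mem _ ha)
      obtain ⟨i, hi⟩ := this
      exact ⟨i, idxKey_injective ((hl i).trans hi)⟩

lemma enumeration_unique {e s : ℕ} {l l' : Fin s → Fin e → ℕ}
    (hl : ∀ i i', i < i' → mIdxLT (l i) (l i')) (hl' : ∀ i i', i < i' → mIdxLT (l' i) (l' i'))
    (h : Set.range l = Set.range l') : l = l' := by
  have h1 : StrictMono (idxKey ∘ l) := fun i i' hi => idxKey_lt_iff.2 (hl i i' hi)
  have h2 : StrictMono (idxKey ∘ l') := fun i i' hi => idxKey_lt_iff.2 (hl' i i' hi)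
  have h3 : idxKey ∘ l = idxKey ∘ l' := (StrictMono.range_inj h1 h2).1 (by
    rw [Set.range_comp, Set.range_comp, h])
  exact funext fun i => idxKey_injective (congrFun h3 i)

lemma enumeration_injective {e s : ℕ} {l : Fin s → Fin e → ℕ}
    (hl : ∀ i i', i < i' → mIdxLT (l i) (l i')) : Function.Injective l := by
  have h1 : StrictMono (idxKey ∘ l) := fun i i' hi => idxKey_lt_iff.2 (hl i i' hi)
  exact h1.injective.of_comp

/-! ### The bijection with `p_s(ν, λ)` -/

/-- The multiplicities attached to `(k, l) ∈ p_s(ν, λ)`: the value at `(i, m)` is the `i`-th entry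
of `k_j` if `m = l_j`, and `0` if `m` is none of the `l_j`. -/
def multOf {d e s : ℕ} (p : (Fin s → Fin d → ℕ) × (Fin s → Fin e → ℕ)) (i : Fin d)
    (m : Fin e →₀ ℕ) : ℕ :=
  ∑ j, if p.2 j = ⇑m then p.1 j i else 0

lemma multOf_apply {d e s : ℕ} {p : (Fin s → Fin d → ℕ) × (Fin s → Fin e → ℕ)}
    (hp : Function.Injective p.2) (i : Fin d) {m : Fin e →₀ ℕ} {j : Fin s} (h : p.2 j = ⇑m) :
    multOf p i m = p.1 j i := by
  rw [multOf, Finset.sum_eq_single j]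
  · simp [h]
  · intro b _ hb
    rw [if_neg]
    intro h'
    exact hb (hp (h'.trans h.symm))
  · simp

lemma multOf_eq_zero {d e s : ℕ} {p : (Fin s → Fin d → ℕ) × (Fin s → Fin e → ℕ)}
    (i : Fin d) {m : Fin e →₀ ℕ} (h : ∀ j, p.2 j ≠ ⇑m) : multOf p i m = 0 :=
  Finset.sum_eq_zero fun j _ => if_neg (h j)

@[to_additive]
lemma prod_multOf {M : Type*} [CommMonoid M] {d e s : ℕ}
    {p : (Fin s → Fin d → ℕ) × (Fin s → Fin e → ℕ)} (hp : Function.Injective p.2)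
    {L : Finset (Fin e →₀ ℕ)} (hL : ∀ j, Finsupp.equivFunOnFinite.symm (p.2 j) ∈ L)
    (Φ : (Fin e → ℕ) → (Fin d → ℕ) → M) (hΦ : ∀ m, Φ m 0 = 1) :
    ∏ m ∈ L, Φ m (fun i => multOf p i m) = ∏ j, Φ (p.2 j) (p.1 j) := by
  classical
  have hsub : Finset.univ.image (fun j => Finsupp.equivFunOnFinite.symm (p.2 j)) ⊆ L := by
    intro m hm
    obtain ⟨j, -, rfl⟩ := Finset.mem_image.1 hm
    exact hL j
  rw [← Finset.prod_subset hsub, Finset.prod_image]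
  · refine Finset.prod_congr rfl fun j _ => ?_
    congr 1
    funext i
    exact multOf_apply hp i rfl
  · exact fun j _ j' _ h => hp (Finsupp.equivFunOnFinite.symm.injective h)
  · intro m _ hm
    rw [← hΦ m]
    congr 1
    funext i
    refine multOf_eq_zero i fun j hj => hm ?_
    refine Finset.mem_image.2 ⟨j, Finset.mem_univ _, ?_⟩
    exact DFunLike.coe_injective hj

lemma mIdxLT_zero_iff {e : ℕ} {l : Fin e → ℕ} : mIdxLT 0 l ↔ l ≠ 0 := by
  constructor
  · rintro (h | ⟨-, i, -, h⟩) rfl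
    · simp at h
    · simp at h
  · intro h
    left
    obtain ⟨i, hi⟩ := Function.ne_iff.1 h
    simp only [Pi.zero_apply, Finset.sum_const_zero]
    exact lt_of_lt_of_le (Nat.pos_of_ne_zero hi)
      (Finset.single_le_sum (f := l) (fun _ _ => Nat.zero_le _) (Finset.mem_univ i))

section
variable {d e s : ℕ} {ν : Fin e → ℕ} {lam : Fin d → ℕ}
  {p : (Fin s → Fin d → ℕ) × (Fin s → Fin e → ℕ)}

lemma psSet_fst_le (hp : p ∈ psSet d e s ν lam) (j : Fin s) : p.1 j ≤ lam := fun i => by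
  rw [← hp.2.2.2.1 i]
  exact Finset.single_le_sum (f := fun j => p.1 j i) (fun _ _ => Nat.zero_le _) (Finset.mem_univ j)

lemma psSet_snd_le (hp : p ∈ psSet d e s ν lam) (j : Fin s) : p.2 j ≤ ν := fun i => by
  rw [← hp.2.2.2.2 i]
  refine le_trans (Nat.le_mul_of_pos_left _ (hp.1 j)) ?_
  exact Finset.single_le_sum (f := fun j => (∑ j', p.1 j j') * p.2 j i)
    (fun _ _ => Nat.zero_le _) (Finset.mem_univ j)

lemma psSet_finite : (psSet d e s ν lam).Finite := by
  refine Set.Finite.subset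
    (((Set.finite_Iic (fun _ : Fin s => lam))).prod (Set.finite_Iic (fun _ : Fin s => ν))) ?_
  exact fun p hp => ⟨fun j => psSet_fst_le hp j, fun j => psSet_snd_le hp j⟩

lemma psSet_mem_idx (hp : p ∈ psSet d e s ν lam) (j : Fin s) :
    Finsupp.equivFunOnFinite.symm (p.2 j) ∈ (degIdx e (∑ i, ν i + 1)).erase 0 := by
  rw [Finset.mem_erase, mem_degIdx]
  refine ⟨fun h => mIdxLT_zero_iff.1 (hp.2.1 j) ?_, Nat.lt_succ_of_le ?_⟩
  · have := congrArg (fun m : Fin e →₀ ℕ => ⇑m) h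
    simpa using this
  · exact Finset.sum_le_sum fun i _ => psSet_snd_le hp j i

lemma multOf_mem (hp : p ∈ psSet d e s ν lam) :
    multOf p ∈ expansionIdx ((degIdx e (∑ i, ν i + 1)).erase 0) lam
      (Finsupp.equivFunOnFinite.symm ν) := by
  have hinj := enumeration_injective hp.2.2.1
  rw [mem_expansionIdx]
  refine ⟨fun i => ?_, fun i m h => ?_, ?_⟩
  · rw [← hp.2.2.2.1 i]
    exact sum_multOf hinj (psSet_mem_idx hp) (fun _ k => k i) (fun _ => rfl)
  · by_contra hm
    refine h (multOf_eq_zero i fun j hj => hm ?_)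
    have : m = Finsupp.equivFunOnFinite.symm (p.2 j) := DFunLike.coe_injective hj.symm
    rw [this]
    exact psSet_mem_idx hp j
  · ext a
    rw [Finset.sum_comm]
    simp only [Finsupp.coe_finsetSum, Finset.sum_apply, Finsupp.smul_apply, smul_eq_mul,
      ← Finset.sum_mul]
    rw [Finsupp.coe_equivFunOnFinite_symm, ← hp.2.2.2.2 a]
    exact sum_multOf hinj (psSet_mem_idx hp) (fun m k => (∑ i, k i) * m a) (fun _ => by simp)

/-- The `l_j` are recovered from the multiplicities as the indices of nonzero multiplicity. -/
lemma range_snd_eq (hp : p ∈ psSet d e s ν lam) :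
    Set.range p.2 = {l | ∃ i, multOf p i (Finsupp.equivFunOnFinite.symm l) ≠ 0} := by
  have hinj := enumeration_injective hp.2.2.1
  ext l
  constructor
  · rintro ⟨j, rfl⟩
    by_contra h
    simp only [Set.mem_ofPred_eq, not_exists, not_not] at h
    have := hp.1 j
    rw [Finset.sum_eq_zero] at this
    · exact lt_irrefl _ this
    · intro i _
      rw [← h i]
      exact (multOf_apply hinj i rfl).symm
  · rintro ⟨i, hi⟩
    by_contra h
    exact hi (multOf_eq_zero i fun j hj => h ⟨j, hj⟩)

end

/-- The multiplicities determine both the number `s` of indices and the tuple in `p_s(ν, λ)`. -/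
lemma multOf_injective {d e s s' : ℕ} {ν : Fin e → ℕ} {lam : Fin d → ℕ}
    {p : (Fin s → Fin d → ℕ) × (Fin s → Fin e → ℕ)}
    {p' : (Fin s' → Fin d → ℕ) × (Fin s' → Fin e → ℕ)}
    (hp : p ∈ psSet d e s ν lam) (hp' : p' ∈ psSet d e s' ν lam) (h : multOf p = multOf p') :
    (⟨s, p⟩ : Σ s : ℕ, (Fin s → Fin d → ℕ) × (Fin s → Fin e → ℕ)) = ⟨s', p'⟩ := by
  have hinj := enumeration_injective hp.2.2.1
  have hinj' := enumeration_injective hp'.2.2.1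
  have hr : Set.range p.2 = Set.range p'.2 := by
    rw [range_snd_eq hp, range_snd_eq hp', h]
  have hs : s = s' := by
    have h1 := Set.ncard_range_of_injective hinj
    have h2 := Set.ncard_range_of_injective hinj'
    rw [hr, h2] at h1
    simpa using h1.symm
  subst hs
  have h2 := enumeration_unique hp.2.2.1 hp'.2.2.1 hr
  have h1 : p.1 = p'.1 := by
    funext j i
    rw [← multOf_apply (m := Finsupp.equivFunOnFinite.symm (p.2 j)) hinj i rfl,
      ← multOf_apply (m := Finsupp.equivFunOnFinite.symm (p'.2 j)) hinj' i rfl, h, h2]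
  rw [Prod.ext h1 h2]

lemma exists_multOf_eq {d e : ℕ} {ν : Fin e → ℕ} {lam : Fin d → ℕ}
    {K : Fin d → (Fin e →₀ ℕ) → ℕ}
    (hK : K ∈ expansionIdx ((degIdx e (∑ i, ν i + 1)).erase 0) lam
      (Finsupp.equivFunOnFinite.symm ν)) :
    ∃ s, ∃ p ∈ psSet d e s ν lam, multOf p = K := by
  classical
  set L := (degIdx e (∑ i, ν i + 1)).erase 0 with hLdef
  obtain ⟨h1, h2, h3⟩ := mem_expansionIdx.1 hK
  set S : Finset (Fin e → ℕ) :=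
    (L.filter fun m => ∃ i, K i m ≠ 0).image (fun m : Fin e →₀ ℕ => ⇑m) with hS
  obtain ⟨l, hl, hr⟩ := exists_enumeration S
  set p : (Fin S.card → Fin d → ℕ) × (Fin S.card → Fin e → ℕ) :=
    (fun j i => K i (Finsupp.equivFunOnFinite.symm (l j)), l) with hpdef
  have hinj : Function.Injective p.2 := enumeration_injective hl
  have hlS : ∀ j, Finsupp.equivFunOnFinite.symm (l j) ∈ L ∧
      ∃ i, K i (Finsupp.equivFunOnFinite.symm (l j)) ≠ 0 := by
    intro j
    have : l j ∈ (S : Set (Fin e → ℕ)) := hr ▸ Set.mem_range_self j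
    obtain ⟨m, hm, hmj⟩ := Finset.mem_image.1 (Finset.mem_coe.1 this)
    have hm' : Finsupp.equivFunOnFinite.symm (l j) = m := DFunLike.coe_injective hmj.symm
    rw [hm']
    exact Finset.mem_filter.1 hm
  have hmult : multOf p = K := by
    funext i m
    by_cases hm : ∃ j, p.2 j = ⇑m
    · obtain ⟨j, hj⟩ := hm
      rw [multOf_apply hinj i hj]
      have hm' : Finsupp.equivFunOnFinite.symm (l j) = m := DFunLike.coe_injective hj
      simp only [hpdef, hm']
    · push Not at hm
      rw [multOf_eq_zero i hm]
      by_contra h0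
      have : ⇑m ∈ (S : Set (Fin e → ℕ)) := Finset.mem_coe.2 (Finset.mem_image.2
        ⟨m, Finset.mem_filter.2 ⟨h2 i m (Ne.symm h0), i, Ne.symm h0⟩, rfl⟩)
      rw [← hr] at this
      obtain ⟨j, hj⟩ := this
      exact hm j hj
  refine ⟨S.card, p, ⟨fun j => ?_, fun j => ?_, hl, fun i => ?_, fun a => ?_⟩, hmult⟩
  · obtain ⟨i, hi⟩ := (hlS j).2
    exact lt_of_lt_of_le (Nat.pos_of_ne_zero hi)
      (Finset.single_le_sum (f := p.1 j) (fun _ _ => Nat.zero_le _) (Finset.mem_univ i))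
  · rw [mIdxLT_zero_iff]
    intro h0
    refine (Finset.mem_erase.1 (hlS j).1).1 ?_
    change l j = 0 at h0
    rw [h0]
    exact DFunLike.coe_injective rfl
  · rw [← h1 i, ← hmult]
    exact (sum_multOf hinj (fun j => (hlS j).1) (fun _ k => k i) (fun _ => rfl)).symm
  · have h4 := congrArg (fun m : Fin e →₀ ℕ => m a) h3
    rw [Finset.sum_comm] at h4
    simp only [Finsupp.coe_finsetSum, Finset.sum_apply, Finsupp.smul_apply, smul_eq_mul,
      ← Finset.sum_mul, Finsupp.coe_equivFunOnFinite_symm] at h4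
    rw [← h4, ← hmult]
    exact (sum_multOf hinj (fun j => (hlS j).1) (fun m k => (∑ i, k i) * m a)
      (fun _ => by simp)).symm

lemma psSet_card_mem {d e s n : ℕ} {ν : Fin e → ℕ} {lam : Fin d → ℕ}
    {p : (Fin s → Fin d → ℕ) × (Fin s → Fin e → ℕ)} (hp : p ∈ psSet d e s ν lam)
    (h1 : 1 ≤ ∑ i, lam i) (h2 : ∑ i, lam i ≤ n) : s ∈ Finset.Icc 1 n := by
  have hsum : ∑ i, lam i = ∑ j, ∑ i, p.1 j i := by
    rw [Finset.sum_comm]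
    exact Finset.sum_congr rfl fun i _ => (hp.2.2.2.1 i).symm
  rw [Finset.mem_Icc]
  constructor
  · rcases Nat.eq_zero_or_pos s with rfl | h
    · simp [hsum] at h1
    · exact h
  · calc s = ∑ _j : Fin s, 1 := by simp
      _ ≤ ∑ j, ∑ i, p.1 j i := Finset.sum_le_sum fun j _ => hp.1 j
      _ ≤ n := hsum ▸ h2

/-- Regrouping of the terms of the multinomial expansion by the set `{l_1 ≺ ⋯ ≺ l_s}` of indices
that are actually used. -/
lemma sum_expansionIdx_eq {d e n : ℕ} {ν : Fin e → ℕ} {lam : Fin d → ℕ} (hν : ∑ i, ν i = n)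
    (h1 : 1 ≤ ∑ i, lam i) (h2 : ∑ i, lam i ≤ n)
    (Φ : (Fin e → ℕ) → (Fin d → ℕ) → ℝ) (hΦ : ∀ m, Φ m 0 = 1) :
    ∑ K ∈ expansionIdx ((degIdx e (n + 1)).erase 0) lam (Finsupp.equivFunOnFinite.symm ν),
        ∏ m ∈ (degIdx e (n + 1)).erase 0, Φ m (fun i => K i m) =
      ∑ s ∈ Finset.Icc 1 n, ∑ᶠ p ∈ psSet d e s ν lam, ∏ j, Φ (p.2 j) (p.1 j) := by
  classical
  subst hν
  simp only [finsum_mem_eq_finite_toFinset_sum _ psSet_finite]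
  rw [Finset.sum_sigma']
  symm
  refine Finset.sum_bij (fun q _ => multOf q.2) ?_ ?_ ?_ ?_
  · intro q hq
    exact multOf_mem (psSet_finite.mem_toFinset.1 (Finset.mem_sigma.1 hq).2)
  · intro q hq q' hq' h
    exact multOf_injective (psSet_finite.mem_toFinset.1 (Finset.mem_sigma.1 hq).2)
      (psSet_finite.mem_toFinset.1 (Finset.mem_sigma.1 hq').2) h
  · intro K hK
    obtain ⟨s, p, hp, rfl⟩ := exists_multOf_eq hK
    exact ⟨⟨s, p⟩, Finset.mem_sigma.2
      ⟨psSet_card_mem hp h1 h2, psSet_finite.mem_toFinset.2 hp⟩, rfl⟩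
  · intro q hq
    have hp := psSet_finite.mem_toFinset.1 (Finset.mem_sigma.1 hq).2
    exact (prod_multOf (enumeration_injective hp.2.2.1) (psSet_mem_idx hp) Φ hΦ).symm

/-! ### The coefficients of the composed polynomial -/

lemma one_le_sum_of_ne_zero {d : ℕ} {m : Fin d →₀ ℕ} (h : m ≠ 0) : 1 ≤ ∑ i, m i := by
  rw [Nat.one_le_iff_ne_zero]
  intro h0
  refine h (Finsupp.ext fun i => ?_)
  exact Finset.sum_eq_zero_iff.1 h0 i (Finset.mem_univ i)

lemma taylorPoly_sub_C {e : ℕ} (n : ℕ) (U : Set (Fin e → ℝ)) (F : (Fin e → ℝ) → ℝ)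
    (x : Fin e → ℝ) :
    taylorPoly U F n x - C (F x) = ∑ l ∈ (degIdx e (n + 1)).erase 0,
      monomial l (pderivW U F l x / ((∏ i, (l i).factorial : ℕ) : ℝ)) := by
  classical
  have h0 : (0 : Fin e →₀ ℕ) ∈ degIdx e (n + 1) := mem_degIdx.2 (by simp)
  rw [taylorPoly, ← Finset.add_sum_erase _ _ h0]
  simp [pderivW_zero, ← C_apply]

lemma coeff_compPoly {d e : ℕ} (n : ℕ) (V : Set (Fin d → ℝ)) (U : Set (Fin e → ℝ))
    (f : (Fin d → ℝ) → ℝ) (g : (Fin e → ℝ) → (Fin d → ℝ)) (x : Fin e → ℝ)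
    {ν : Fin e →₀ ℕ} (hν : ν ≠ 0) :
    coeff ν (compPoly n V U f g x) = ∑ lam ∈ (degIdx d (n + 1)).erase 0,
      pderivW V f lam (g x) * ∑ K ∈ expansionIdx ((degIdx e (n + 1)).erase 0) lam ν,
        ∏ l ∈ (degIdx e (n + 1)).erase 0,
          (∏ i : Fin d, (pderivW U (fun y => g y i) l x) ^ (K i l)) /
            (((∏ i, Nat.factorial (K i l) : ℕ) : ℝ) *
              ((∏ i', Nat.factorial (l i') : ℕ) : ℝ) ^ (∑ i, K i l)) := by
  classical
  have h0 : (0 : Fin d →₀ ℕ) ∈ degIdx d (n + 1) := mem_degIdx.2 (by simp)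
  rw [compPoly]
  simp only [taylorPoly_sub_C n U (fun y => g y _) x]
  rw [taylorPoly, map_sum, coeff_sum, ← Finset.add_sum_erase _ _ h0]
  -- the constant term of the outer polynomial contributes only to the coefficient of `X ^ 0`
  rw [aeval_monomial, Finsupp.prod_zero_index, mul_one, algebraMap_eq, coeff_C, if_neg hν.symm,
    zero_add]
  refine Finset.sum_congr rfl fun lam _ => ?_
  have hfac : ((∏ i, (lam i).factorial : ℕ) : ℝ) ≠ 0 :=
    Nat.cast_ne_zero.2 (Finset.prod_ne_zero_iff.2 fun _ _ => Nat.factorial_ne_zero _)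
  rw [aeval_monomial, algebraMap_eq, coeff_C_mul, Finsupp.prod_fintype _ _ (fun _ => pow_zero _),
    coeff_prod_pow, ← mul_assoc, div_mul_cancel₀ _ hfac]
  congr 1
  refine Finset.sum_congr rfl fun K _ => Finset.prod_congr rfl fun l _ => ?_
  simp only [div_pow, Finset.prod_div_distrib, Finset.prod_pow_eq_pow_sum, Nat.cast_prod]
  rw [div_div, mul_comm]

/-- the multivariate Faà di Bruno formula. -/
theorem faa_di_bruno {d e n : ℕ} (hn : 0 < n)
    (V : Set (Fin d → ℝ)) (hV : IsOpen V) (U : Set (Fin e → ℝ)) (hU : IsOpen U)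
    (f : (Fin d → ℝ) → ℝ) (g : (Fin e → ℝ) → (Fin d → ℝ)) (hgU : Set.MapsTo g U V)
    (hf : ContDiffOn ℝ n f V) (hg : ContDiffOn ℝ n g U)
    (x : Fin e → ℝ) (hx : x ∈ U) (ν : Fin e → ℕ) (hν : (∑ i, ν i) = n) :
    pderivW U (fun y => f (g y)) ν x =
      ∑ᶠ lam ∈ {lam : Fin d → ℕ | 1 ≤ (∑ i, lam i) ∧ (∑ i, lam i) ≤ n},
        pderivW V f lam (g x) *
          ∑ s ∈ Finset.Icc 1 n,
            ∑ᶠ p ∈ psSet d e s ν lam,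
              ((∏ i, Nat.factorial (ν i) : ℕ) : ℝ) *
                ∏ jj : Fin s,
                  (∏ i : Fin d, (pderivW U (fun y => g y i) (p.2 jj) x) ^ (p.1 jj i)) /
                    (((∏ i, Nat.factorial (p.1 jj i) : ℕ) : ℝ) *
                      ((∏ i', Nat.factorial (p.2 jj i') : ℕ) : ℝ) ^ (∑ i, p.1 jj i)) := by
  classical
  have hν0 : Finsupp.equivFunOnFinite.symm ν ≠ 0 := by
    intro h
    have h' : ν = 0 := by simpa using congrArg (fun m : Fin e →₀ ℕ => ⇑m) h
    simp only [h', Pi.zero_apply, Finset.sum_const_zero] at hν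
    exact hn.ne hν
  have hfac : ((∏ i, (ν i).factorial : ℕ) : ℝ) ≠ 0 :=
    Nat.cast_ne_zero.2 (Finset.prod_ne_zero_iff.2 fun _ _ => Nat.factorial_ne_zero _)
  have hmain : pderivW U (fun y => f (g y)) ν x = ((∏ i, (ν i).factorial : ℕ) : ℝ) *
      coeff (Finsupp.equivFunOnFinite.symm ν) (compPoly n V U f g x) := by
    have h := coeff_taylorPoly_comp hn hV hU hgU hf hg n (Finsupp.equivFunOnFinite.symm ν) hν le_rfl x hx
    rw [← h, coeff_taylorPoly _ _ _ _ hν.le]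
    simp only [Finsupp.coe_equivFunOnFinite_symm]
    field_simp
  have hset : {lam : Fin d → ℕ | 1 ≤ (∑ i, lam i) ∧ (∑ i, lam i) ≤ n} =
      ↑(((degIdx d (n + 1)).erase 0).map
        ⟨fun m : Fin d →₀ ℕ => (⇑m : Fin d → ℕ), DFunLike.coe_injective⟩) := by
    ext lam
    simp only [Set.mem_ofPred_eq, Finset.coe_map, Function.Embedding.coeFn_mk, Set.mem_image,
      Finset.mem_coe, Finset.mem_erase, mem_degIdx]
    constructor
    · rintro ⟨h1, h2⟩
      refine ⟨Finsupp.equivFunOnFinite.symm lam, ⟨fun h => ?_, Nat.lt_succ_of_le h2⟩, rfl⟩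
      have h' : lam = 0 := by simpa using congrArg (fun m : Fin d →₀ ℕ => ⇑m) h
      simp [h'] at h1
    · rintro ⟨m, ⟨h1, h2⟩, rfl⟩
      exact ⟨one_le_sum_of_ne_zero h1, Nat.le_of_lt_succ h2⟩
  rw [hmain, coeff_compPoly _ _ _ _ _ _ hν0, hset, finsum_mem_coe_finset, Finset.sum_map,
    Finset.mul_sum]
  refine Finset.sum_congr rfl fun lam hlam => ?_
  rw [Finset.mem_erase, mem_degIdx] at hlam
  have hΦ := sum_expansionIdx_eq hν (one_le_sum_of_ne_zero hlam.1) (Nat.le_of_lt_succ hlam.2)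
    (fun l k => (∏ i : Fin d, (pderivW U (fun y => g y i) l x) ^ (k i)) /
      (((∏ i, Nat.factorial (k i) : ℕ) : ℝ) *
        ((∏ i', Nat.factorial (l i') : ℕ) : ℝ) ^ (∑ i, k i))) (fun _ => by simp)
  simp only [finsum_mem_eq_finite_toFinset_sum _ psSet_finite] at hΦ
  simp only [Function.Embedding.coeFn_mk, finsum_mem_eq_finite_toFinset_sum _ psSet_finite,
    ← Finset.mul_sum]
  rw [← hΦ, mul_left_comm]

end
end

section
/- Composition of (A,0)-mild functions: Suppose f : V → ℝ, with V ⊂ ℝ^d open, is (A_f,0)-mild and g : U → V, with U ⊂ ℝ^e open, is (A_g,0)-mild. Then f ∘ g : U → ℝ is (A,0)-mild with A = A_g·(d·A_f + 1). -/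
/-!
By Faà di Bruno's formula, the derivative of `f ∘ g` of order `n` along coordinate directions is a
sum over the partitions `c` of `{0, …, n - 1}`, the term of `c` being the derivative of `f` of order
`k = c.length` applied to the vectors of derivatives of `g` along the parts of `c`. Expanding these
vectors in the standard basis of `ℝ^d` and using mildness of `f` and `g` (with constants at most
`B_f` and `1`), the term of `c` is at most `B_f A_g ^ n (d A_f) ^ k k! ∏ (sizes of the parts)!`
(`abs_multilinear_le`).

With `q = d A_f`, the sum over `c` of `q ^ k k! ∏ (sizes of the parts)!` is by Faà di Bruno's formula
again the `n`-th derivative at `0` of the composition of `1 / (1 - q y)` with `t / (1 - t)`, that is,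
of `(1 - t) / (1 - (q + 1) t)`. This is at most `(q + 1) ^ n n!` (`sum_orderedFinpartition_le`).

Mildness only controls derivatives along directions listed in nondecreasing order, whereas the
expansion in the standard basis produces arbitrary sequences of directions. The gap is closed by the
symmetry of iterated derivatives of smooth functions (`dirD_perm`, `Mild.abs_le`).
-/

open Set

noncomputable section

/-- `f` is `(A,B,C)`-mild up to order `r` on `U`. -/
def MildUpTo {d : ℕ} (r : ℕ∞) (U : Set (Fin d → ℝ)) (f : (Fin d → ℝ) → ℝ)
    (A B C : ℝ) : Prop :=
  ContDiffOn ℝ r f U ∧ ∀ ν : Fin d → ℕ, (∑ i, ν i : ℕ∞) ≤ r → ∀ x ∈ U,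
    |pderivW U f ν x| ≤ B ^ (C + 1) * A ^ (∑ i, ν i) * (Nat.factorial (∑ i, ν i) : ℝ) ^ (C + 1)

/-- `f` is `(A,B,C)`-mild on `U`. -/
def Mild {d : ℕ} (U : Set (Fin d → ℝ)) (f : (Fin d → ℝ) → ℝ) (A B C : ℝ) : Prop :=
  MildUpTo ⊤ U f A B C

/-- `f` is weakly `(A,B,C)`-mild up to order `r` on `U ⊆ (0,1)^d`. -/
def WeaklyMildUpTo {d : ℕ} (r : ℕ∞) (U : Set (Fin d → ℝ)) (f : (Fin d → ℝ) → ℝ)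
    (A B C : ℝ) : Prop :=
  ContDiffOn ℝ r f U ∧ ∀ ν : Fin d → ℕ, (∑ i, ν i : ℕ∞) ≤ r → ∀ x ∈ U,
    |pderivW U f ν x| ≤
      B ^ (C + 1) * A ^ (∑ i, ν i) * (Nat.factorial (∑ i, ν i) : ℝ) ^ (C + 1) /
        ∏ i, (x i) ^ (ν i)

/-- `f` is weakly `(A,B,C)`-mild on `U`. -/
def WeaklyMild {d : ℕ} (U : Set (Fin d → ℝ)) (f : (Fin d → ℝ) → ℝ) (A B C : ℝ) : Prop :=
  WeaklyMildUpTo ⊤ U f A B C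

/-- `f` is a Gevrey function of class `α` on `U`. -/
def Gevrey {d : ℕ} (U : Set (Fin d → ℝ)) (f : (Fin d → ℝ) → ℝ) (α : ℝ) : Prop :=
  ContDiffOn ℝ (⊤ : ℕ∞) f U ∧ ∃ M R : ℝ, 0 < M ∧ 0 < R ∧ ∀ ν : Fin d → ℕ, ∀ x ∈ U,
    |pderivW U f ν x| ≤ (M * (Nat.factorial (∑ i, ν i) : ℝ) / R ^ (∑ i, ν i)) ^ α

open scoped ContDiff Nat

/-! ### Symmetry of iterated derivatives of smooth functions -/

/-- The iterated directional derivative of `f` within `U` along a list of directions; the head of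
the list is the direction of the last differentiation. -/
def dirD {E : Type*} [NormedAddCommGroup E] [NormedSpace ℝ E] (U : Set E) (f : E → ℝ) :
    List E → E → ℝ
  | [] => f
  | v :: l => fun x => fderivWithin ℝ (dirD U f l) U x v

section
variable {E : Type*} [NormedAddCommGroup E] [NormedSpace ℝ E] {U : Set E} {f : E → ℝ}

lemma contDiffOn_dirD (hU : IsOpen U) (hf : ContDiffOn ℝ ∞ f U) (l : List E) :
    ContDiffOn ℝ ∞ (dirD U f l) U := by
  induction l with
  | nil => exact hf
  | cons v l ih =>
    exact (ih.fderivWithin hU.uniqueDiffOn (by simp)).clm_apply contDiffOn_const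

/-- Iterated directional derivatives of a smooth function do not depend on the order of the
directions. Adjacent transpositions are the symmetry of the second derivative. -/
lemma dirD_perm (hU : IsOpen U) (hf : ContDiffOn ℝ ∞ f U) {l₁ l₂ : List E} (h : l₁.Perm l₂) :
    EqOn (dirD U f l₁) (dirD U f l₂) U := by
  induction h with
  | nil => exact fun _ _ => rfl
  | cons v _ ih =>
    intro x hx
    simp only [dirD]
    rw [fderivWithin_congr ih (ih hx)]
  | swap v w l =>
    intro x hx
    have hl := contDiffOn_dirD hU hf l
    have hd : DifferentiableWithinAt ℝ (fderivWithin ℝ (dirD U f l) U) U x :=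
      (hl.fderivWithin hU.uniqueDiffOn (m := ∞) (by simp)).differentiableOn (by simp) x hx
    have hs := (hl x hx).isSymmSndFDerivWithinAt
      (by rw [minSmoothness_of_isRCLikeNormedField]; exact WithTop.coe_le_coe.2 le_top) hU.uniqueDiffOn
      (subset_closure (by rwa [hU.interior_eq])) hx
    have key : ∀ a b : E, dirD U f (a :: b :: l) x =
        fderivWithin ℝ (fderivWithin ℝ (dirD U f l) U) U x a b := by
      intro a b
      simp only [dirD]
      rw [fderivWithin_clm_apply (hU.uniqueDiffOn x hx) hd (differentiableWithinAt_const b)]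
      simp
    rw [key, key, hs.eq]
  | trans _ _ ih₁ ih₂ => exact ih₁.trans ih₂

lemma iteratedFDerivWithin_eq_dirD (hU : IsOpen U) (hf : ContDiffOn ℝ ∞ f U) {n : ℕ}
    (v : Fin n → E) : EqOn (fun x => iteratedFDerivWithin ℝ n f U x v)
      (dirD U f (List.ofFn v)) U := by
  induction n with
  | zero => intro x _; simp [dirD]
  | succ n ih =>
    intro x hx
    have hd : DifferentiableWithinAt ℝ (iteratedFDerivWithin ℝ n f U) U x :=
      (hf.differentiableOn_iteratedFDerivWithin (by exact_mod_cast ENat.natCast_lt_top n)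
        hU.uniqueDiffOn) x hx
    rw [List.ofFn_succ]
    change _ = fderivWithin ℝ (dirD U f (List.ofFn (Fin.tail v))) U x (v 0)
    rw [← fderivWithin_congr (ih (Fin.tail v)) (ih (Fin.tail v) hx),
      fderivWithin_continuousMultilinear_apply_const (hU.uniqueDiffOn x hx) hd]
    rfl
end

/-! ### Multi-indices and sequences of coordinate directions -/

section
variable {d : ℕ}

/-- The nondecreasing list of coordinate indices in which `i` occurs `ν i` times; it indexes the
directions `mDirs ν`. -/
def mIdx (ν : Fin d → ℕ) : List (Fin d) :=
  (List.finRange d).flatMap fun i => List.replicate (ν i) i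

lemma mDirs_eq_map (ν : Fin d → ℕ) :
    mDirs ν = (mIdx ν).map fun i => (Pi.single i 1 : Fin d → ℝ) := by
  simp [mDirs, mIdx, List.map_flatMap]

lemma length_mIdx (ν : Fin d → ℕ) : (mIdx ν).length = ∑ i, ν i := by
  simp [mIdx, List.length_flatMap, Fin.sum_univ_def]

lemma count_mIdx (ν : Fin d → ℕ) (i : Fin d) : (mIdx ν).count i = ν i := by
  simp only [mIdx, List.count_flatMap, Function.comp_def, List.count_replicate]
  rw [← Fin.sum_univ_def]
  simp

lemma pderivW_eq_dirD {U : Set (Fin d → ℝ)} {f : (Fin d → ℝ) → ℝ} (hU : IsOpen U)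
    (hf : ContDiffOn ℝ ∞ f U) (ν : Fin d → ℕ) {x : Fin d → ℝ} (hx : x ∈ U) :
    pderivW U f ν x = dirD U f (mDirs ν) x := by
  have h := iteratedFDerivWithin_eq_dirD hU hf
    (fun j : Fin (∑ i, ν i) => (mDirs ν).getD (j : ℕ) 0) hx
  have hl : (mDirs ν).length = ∑ i, ν i := by simp [mDirs_eq_map, length_mIdx]
  have hofn : List.ofFn (fun j : Fin (∑ i, ν i) => (mDirs ν).getD (j : ℕ) 0) = mDirs ν := by
    apply List.ext_getElem
    · simp [hl]
    · intro k h1 h2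
      simp [h2]
  rw [hofn] at h
  exact h

/-- Mildness with `C = 0` bounds the iterated derivative along any sequence of coordinate
directions, in whatever order: such a sequence is a rearrangement of `mDirs ν`, where `ν` counts
multiplicities. -/
lemma Mild.abs_le {U : Set (Fin d → ℝ)} {f : (Fin d → ℝ) → ℝ} {A B : ℝ} (hU : IsOpen U)
    (hf : Mild U f A B 0) {n : ℕ} (s : Fin n → Fin d) {x : Fin d → ℝ} (hx : x ∈ U) :
    |iteratedFDerivWithin ℝ n f U x fun j => Pi.single (s j) 1| ≤ B * A ^ n * n ! := by
  have hsm : ContDiffOn ℝ ∞ f U := hf.1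
  set ν : Fin d → ℕ := fun i => (List.ofFn s).count i
  have hperm : (List.ofFn s).Perm (mIdx ν) := by
    rw [List.perm_iff_count]
    intro i
    rw [count_mIdx]
  have hn : ∑ i, ν i = n := by
    rw [← length_mIdx, ← hperm.length_eq, List.length_ofFn]
  have h := hf.2 ν le_top x hx
  rw [pderivW_eq_dirD hU hsm ν hx, hn, mDirs_eq_map,
    ← dirD_perm hU hsm (hperm.map _) hx, List.map_ofFn] at h
  have h2 := iteratedFDerivWithin_eq_dirD hU hsm
    (fun j => (Pi.single (s j) 1 : Fin d → ℝ)) hx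
  simp only [zero_add, Real.rpow_one] at h
  exact (congrArg abs h2).trans_le h

lemma exists_mDirs_getD (ν : Fin d → ℕ) : ∃ t : Fin (∑ i, ν i) → Fin d,
    ∀ j : Fin (∑ i, ν i), (mDirs ν).getD (j : ℕ) 0 = Pi.single (t j) 1 := by
  refine ⟨fun j => (mIdx ν)[(j : ℕ)]'(by rw [length_mIdx]; exact j.2), fun j => ?_⟩
  have : (j : ℕ) < (mIdx ν).length := by rw [length_mIdx]; exact j.2
  simp [mDirs_eq_map, this]
end

/-! ### The combinatorial sum in Faà di Bruno's formula -/

lemma iteratedDeriv_inv_one_sub (q : ℝ) (n : ℕ) :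
    iteratedDeriv n (fun y : ℝ => (1 - q * y)⁻¹) 0 = q ^ n * n ! := by
  have h : (fun y : ℝ => (1 - q * y)⁻¹) = fun y => ((-q) * y + 1)⁻¹ := by
    ext y; ring_nf
  rw [h, iteratedDeriv_eq_iterate, iter_deriv_inv_linear]
  simp only [mul_zero, zero_add, one_zpow, mul_one]
  rw [neg_pow q, mul_right_comm, ← mul_assoc, ← mul_pow]
  simp

/-- The sum on the left is the `n`-th derivative at `0` of `F ∘ G` with `F y = 1 / (1 - q y)` and
`G t = 1 / (1 - t) - 1`, whereas `F ∘ G` is `t ↦ (1 - t) / (1 - (q + 1) t)` near `0`. -/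
lemma sum_orderedFinpartition_le (q : ℝ) (hq : 0 ≤ q) (n : ℕ) :
    ∑ c : OrderedFinpartition n, q ^ c.length * (c.length)! * ∏ j, ((c.partSize j)! : ℝ)
      ≤ (q + 1) ^ n * n ! := by
  set F : ℝ → ℝ := fun y => (1 - q * y)⁻¹
  set G : ℝ → ℝ := fun t => -1 + (1 - 1 * t)⁻¹
  have hG0 : G 0 = 0 := by simp [G]
  have hG : ContDiffAt ℝ ∞ G 0 := by
    refine contDiffAt_const.add (ContDiffAt.inv (by fun_prop) (by simp))
  have hF : ContDiffAt ℝ ∞ F (G 0) := by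
    rw [hG0]
    exact ContDiffAt.inv (by fun_prop) (by simp)
  have hFD := iteratedDeriv_comp_eq_sum_orderedFinpartition hF hG (i := n)
    (by exact_mod_cast le_top)
  have hsum : iteratedDeriv n (F ∘ G) 0 = ∑ c : OrderedFinpartition n,
      q ^ c.length * (c.length)! * ∏ j, ((c.partSize j)! : ℝ) := by
    rw [hFD, hG0]
    refine Finset.sum_congr rfl fun c _ => ?_
    rw [iteratedDeriv_inv_one_sub]
    congr 1
    refine Finset.prod_congr rfl fun j _ => ?_
    have hpos : 0 < c.partSize j := c.partSize_pos j
    -- The parts are nonempty, so the constant `-1` in `G` does not contribute.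
    rw [iteratedDeriv_const_add hpos, iteratedDeriv_inv_one_sub]
    simp
  rw [← hsum]
  rcases Nat.eq_zero_or_pos n with rfl | hn
  · simp [hG0, F]
  have hc : q + 1 ≠ 0 := by positivity
  -- Partial fractions of `(1 - t) / (1 - (q + 1) t)`.
  have hev : F ∘ G =ᶠ[nhds 0]
      fun t => (q + 1)⁻¹ + (1 - (q + 1)⁻¹) * (1 - (q + 1) * t)⁻¹ := by
    have h1 : ∀ᶠ t : ℝ in nhds 0, 1 - t ≠ 0 :=
      ContinuousAt.eventually_ne (by fun_prop) (by simp)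
    have h2 : ∀ᶠ t : ℝ in nhds 0, 1 - (q + 1) * t ≠ 0 :=
      ContinuousAt.eventually_ne (by fun_prop) (by simp)
    filter_upwards [h1, h2] with t ht1 ht2
    have h3 : 1 - q * (-1 + (1 - 1 * t)⁻¹) = (1 - (q + 1) * t) / (1 - t) := by
      rw [one_mul]; field_simp; ring
    simp only [F, G, Function.comp_apply]
    rw [h3]
    field_simp
    ring
  rw [hev.iteratedDeriv_eq, iteratedDeriv_const_add hn,
    iteratedDeriv_const_mul_field, iteratedDeriv_inv_one_sub]
  have : 0 ≤ (q + 1)⁻¹ := by positivity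
  exact mul_le_of_le_one_left (by positivity) (by linarith)

/-! ### The estimate for the composition -/

/-- A bound for a multilinear map on `ℝ^d` obtained by expanding every argument in the standard
basis, which gives `d ^ k` terms. -/
lemma abs_multilinear_le {d k : ℕ} (M : ContinuousMultilinearMap ℝ (fun _ : Fin k => Fin d → ℝ) ℝ)
    (K : ℝ) (hM : ∀ s : Fin k → Fin d, |M fun j => Pi.single (s j) 1| ≤ K)
    (w : Fin k → Fin d → ℝ) (b : Fin k → ℝ) (hw : ∀ j i, |w j i| ≤ b j) :
    |M w| ≤ (d : ℝ) ^ k * (∏ j, b j) * K := by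
  have hexp : M w = ∑ s : Fin k → Fin d, (∏ j, w j (s j)) * M fun j => Pi.single (s j) 1 := by
    have hw' : w = fun j => ∑ i, w j i • (Pi.single i 1 : Fin d → ℝ) := by
      ext j i
      simp [Pi.single_apply]
    conv_lhs => rw [hw', M.map_sum]
    refine Finset.sum_congr rfl fun s _ => ?_
    rw [M.map_smul_univ, smul_eq_mul]
  rw [hexp]
  refine (Finset.abs_sum_le_sum_abs _ _).trans ?_
  refine (Finset.sum_le_card_nsmul _ _ ((∏ j, b j) * K) fun s _ => ?_).trans_eq ?_
  · rw [abs_mul, Finset.abs_prod]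
    exact mul_le_mul (Finset.prod_le_prod (fun _ _ => abs_nonneg _) fun j _ => hw j (s j))
      (hM s) (abs_nonneg _) (Finset.prod_nonneg fun j _ => (abs_nonneg _).trans (hw j (s j)))
  · simp [mul_assoc]

/-- composition of `(A,0)`-mild functions, with `A = A_g (d A_f + 1)`.
(`(A,C)`-mild means `(A,B,C)`-mild for some `B ≤ 1`.) -/
theorem mild_comp_zero {d e : ℕ}
    (V : Set (Fin d → ℝ)) (hV : IsOpen V) (U : Set (Fin e → ℝ)) (hU : IsOpen U)
    (Af Ag : ℝ) (hAf : 0 < Af) (hAg : 0 < Ag)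
    (f : (Fin d → ℝ) → ℝ) (g : (Fin e → ℝ) → (Fin d → ℝ)) (hgU : Set.MapsTo g U V)
    (hf : ∃ Bf : ℝ, 0 < Bf ∧ Bf ≤ 1 ∧ Mild V f Af Bf 0)
    (hg : ∀ i : Fin d, ∃ Bg : ℝ, 0 < Bg ∧ Bg ≤ 1 ∧ Mild U (fun x => g x i) Ag Bg 0) :
    ∃ B : ℝ, 0 < B ∧ B ≤ 1 ∧ Mild U (f ∘ g) (Ag * (d * Af + 1)) B 0 := by
  obtain ⟨B, hB0, hB1, hfm⟩ := hf
  have hfs : ContDiffOn ℝ ∞ f V := hfm.1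
  have hgs : ContDiffOn ℝ ∞ g U := contDiffOn_pi.2 fun i => (hg i).choose_spec.2.2.1
  refine ⟨B, hB0, hB1, hfs.comp hgs hgU, fun ν _ x hx => ?_⟩
  obtain ⟨t, ht⟩ := exists_mDirs_getD ν
  simp only [zero_add, Real.rpow_one, pderivW, ht]
  generalize ∑ i, ν i = n at t
  have hgb : ∀ (m : ℕ) (s : Fin m → Fin e) (i : Fin d),
      |iteratedFDerivWithin ℝ m g U x (fun j => Pi.single (s j) 1) i| ≤ Ag ^ m * m ! := by
    intro m s i
    obtain ⟨Bg, hBg0, hBg1, hm⟩ := hg i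
    have h := hm.abs_le hU s hx
    have hc := (ContinuousLinearMap.proj i : (Fin d → ℝ) →L[ℝ] ℝ).iteratedFDerivWithin_comp_left
      (hgs x hx) hU.uniqueDiffOn hx (i := m) (by exact_mod_cast le_top)
    have hc' : iteratedFDerivWithin ℝ m (fun x => g x i) U x (fun j => Pi.single (s j) 1) =
        iteratedFDerivWithin ℝ m g U x (fun j => Pi.single (s j) 1) i :=
      congrArg (fun M => M fun j => Pi.single (s j) 1) hc
    rw [hc'] at h
    refine h.trans ?_
    rw [mul_assoc]
    exact mul_le_of_le_one_left (by positivity) hBg1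
  rw [iteratedFDerivWithin_comp (hfs _ (hgU hx)) (hgs x hx) hV.uniqueDiffOn hU.uniqueDiffOn hx hgU
    (i := n) (by exact_mod_cast le_top)]
  simp only [FormalMultilinearSeries.taylorComp, _root_.sum_apply,
    FormalMultilinearSeries.compAlongOrderedFinpartition_apply, ftaylorSeriesWithin]
  calc _ ≤ ∑ c : OrderedFinpartition n, (d : ℝ) ^ c.length *
        (∏ j, Ag ^ c.partSize j * ((c.partSize j)! : ℝ)) * (B * Af ^ c.length * (c.length)!) := by
        refine (Finset.abs_sum_le_sum_abs _ _).trans (Finset.sum_le_sum fun c _ => ?_)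
        exact abs_multilinear_le _ _ (fun s => hfm.abs_le hV s (hgU hx)) _ _
          fun j i => hgb _ (fun k => t (c.emb j k)) i
    _ = B * Ag ^ n * ∑ c : OrderedFinpartition n,
          (d * Af) ^ c.length * (c.length)! * ∏ j, ((c.partSize j)! : ℝ) := by
        rw [Finset.mul_sum]
        refine Finset.sum_congr rfl fun c _ => ?_
        rw [Finset.prod_mul_distrib, Finset.prod_pow_eq_pow_sum]
        have : ∑ j, c.partSize j = n := by
          simpa only [Finset.sum_const, Finset.card_univ, Fintype.card_fin, smul_eq_mul, mul_one] using
            c.sum_sigma_eq_sum (fun _ => (1 : ℕ))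
        rw [this]
        ring
    _ ≤ B * Ag ^ n * ((d * Af + 1) ^ n * n !) := by
        gcongr
        exact sum_orderedFinpartition_le _ (by positivity) n
    _ = _ := by rw [mul_pow]; ring
end
end

section
/- Power substitution theorem: Let A ≥ 1, B > 0 and C ≥ 0 be real numbers and suppose f : U → ℝ, with U ⊂ (0,1)^d open, is such that f and all of its first-order partial derivatives are weakly (A,B,C)-mild (up to order +∞). Let r > 0 be an integer, let n_1,…,n_d be integers with n_i ≥ r for all i, define φ : (0,1)^d → (0,1)^d by φ(x_1,…,x_d) = (x_1^{n_1},…,x_d^{n_d}), and set V = φ^{-1}(U). Then f ∘ φ : V → ℝ is (Ã, B, C)-mild up to order r, where Ã = N·A·(d+1)^{C+1} and N = max(n_1,…,n_d). -/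
/-!
Write `φ = powMap n`, `u = φ(x)`, and for a list `L` of coordinate indices write `∂_L` for the
corresponding iterated partial derivative and `y^L` for the product of the `y j`, `j ∈ L`.
Since `φ j` depends on `x j` only, `∂_M (f ∘ φ)(x)` is a sum of terms
`c * (u^L / x^M) * (∂_L f)(u)`, where differentiating once more along `i` replaces `(c, L)` by
`(c * (n i * count i L - count i M), L)` and `(c * n i, i :: L)` (`iterD_comp_powMap`). As long as
`|M| ≤ n i` for all `i`, this recursion gives `∑ |c| * |L|! ≤ (2 * N) ^ |M| * |M|!`
(`chainTerms_sum_le`), and every index of `M` occurs in `L` whenever `c ≠ 0` (`chainTerms_mem`).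

Weak mildness of `f` alone would leave the denominator `x^M`. For `i ∈ L`, weak mildness of `∂ᵢ f`
bounds `u^L * |∂_L f (u)|` with an additional factor `u i` (`iterD_le_of_mem`). Choosing `i ∈ M`
with `u i` minimal, `u i ≤ x^M` because `|M| ≤ r ≤ n j` for all `j` (`min_le_prod`), so the
denominator disappears. Finally `2 ≤ (d + 1) ^ (C + 1)` as soon as there is a direction at all.
-/

open Set

noncomputable section

/-- The power substitution map `φ(x) = (x_1^{n_1},…,x_d^{n_d})`. -/
def powMap {d : ℕ} (n : Fin d → ℕ) : (Fin d → ℝ) → (Fin d → ℝ) := fun x i => x i ^ n i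

open scoped ContDiff

section Auxiliary

variable {d : ℕ}

/-! ### Iterated partial derivatives along lists -/

/-- Iterated partial derivative of `f` along a list of coordinate indices; the head of the list is
the outermost (last) differentiation. -/
def iterD (f : (Fin d → ℝ) → ℝ) : List (Fin d) → (Fin d → ℝ) → ℝ
  | [] => f
  | i :: L => fun x => fderiv ℝ (iterD f L) x (Pi.single i 1)

lemma iterD_contDiffOn {U : Set (Fin d → ℝ)} (hU : IsOpen U) {f : (Fin d → ℝ) → ℝ}
    (hf : ContDiffOn ℝ ∞ f U) (L : List (Fin d)) : ContDiffOn ℝ ∞ (iterD f L) U := by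
  induction L with
  | nil => exact hf
  | cons i L ih => exact (ih.fderiv_of_isOpen hU (m := ∞) (by simp)).clm_apply contDiffOn_const

lemma iterD_differentiableAt {U : Set (Fin d → ℝ)} (hU : IsOpen U) {f : (Fin d → ℝ) → ℝ}
    (hf : ContDiffOn ℝ ∞ f U) (L : List (Fin d)) {x : Fin d → ℝ} (hx : x ∈ U) :
    DifferentiableAt ℝ (iterD f L) x :=
  ((iterD_contDiffOn hU hf L).contDiffAt (hU.mem_nhds hx)).differentiableAt (by simp)

lemma iterD_congr {U : Set (Fin d → ℝ)} (hU : IsOpen U) {f g : (Fin d → ℝ) → ℝ}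
    (h : EqOn f g U) (L : List (Fin d)) : EqOn (iterD f L) (iterD g L) U := by
  induction L with
  | nil => exact h
  | cons i L ih =>
    intro x hx
    have : iterD f L =ᶠ[nhds x] iterD g L := ih.eventuallyEq_of_mem (hU.mem_nhds hx)
    simp only [iterD, this.fderiv_eq]

lemma iterD_append (f : (Fin d → ℝ) → ℝ) (L M : List (Fin d)) :
    iterD f (L ++ M) = iterD (iterD f M) L := by
  induction L with
  | nil => rfl
  | cons i L ih => simp only [List.cons_append, iterD, ih]

/-- Symmetry of second derivatives makes iterated partial derivatives independent of the order. -/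
lemma iterD_perm {U : Set (Fin d → ℝ)} (hU : IsOpen U) {f : (Fin d → ℝ) → ℝ}
    (hf : ContDiffOn ℝ ∞ f U) {L M : List (Fin d)} (h : L.Perm M) :
    EqOn (iterD f L) (iterD f M) U := by
  induction h with
  | nil => exact fun _ _ => rfl
  | @cons i L M _ ih => exact iterD_congr hU ih [i]
  | swap i j L =>
    intro x hx
    have hc := (iterD_contDiffOn hU hf L).contDiffAt (hU.mem_nhds hx)
    have hs := hc.isSymmSndFDerivAt (by
      rw [minSmoothness_of_isRCLikeNormedField]
      exact WithTop.coe_le_coe.2 (le_top : (2 : ℕ∞) ≤ ⊤))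
    have hd : DifferentiableAt ℝ (fderiv ℝ (iterD f L)) x :=
      (hc.fderiv_right (m := ∞) (by simp)).differentiableAt (by simp)
    have key (a b : Fin d) : iterD f (a :: b :: L) x =
        fderiv ℝ (fderiv ℝ (iterD f L)) x (Pi.single a 1) (Pi.single b 1) := by
      simp only [iterD]
      rw [fderiv_clm_apply hd (by fun_prop)]
      simp
    rw [key, key]
    exact hs _ _
  | trans _ _ ih₁ ih₂ => exact fun x hx => (ih₁ hx).trans (ih₂ hx)

lemma iteratedFDerivWithin_eq_iterD {U : Set (Fin d → ℝ)} (hU : IsOpen U) {f : (Fin d → ℝ) → ℝ}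
    (hf : ContDiffOn ℝ ∞ f U) (L : List (Fin d)) {m : ℕ} (hm : L.length = m)
    {x : Fin d → ℝ} (hx : x ∈ U) :
    iteratedFDerivWithin ℝ m f U x
      (fun j => (L.map fun i => (Pi.single i 1 : Fin d → ℝ)).getD (j : ℕ) 0) = iterD f L x := by
  induction L generalizing m x with
  | nil => subst hm; simp [iterD]
  | cons i L ih =>
    subst hm
    simp only [List.length_cons]
    rw [iteratedFDerivWithin_succ_apply_left, fderivWithin_of_isOpen hU hx]
    have hd : DifferentiableAt ℝ (iteratedFDerivWithin ℝ L.length f U) x :=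
      ((hf.differentiableOn_iteratedFDerivWithin (m := L.length)
        (by exact_mod_cast ENat.natCast_lt_top _) hU.uniqueDiffOn) x hx).differentiableAt
        (hU.mem_nhds hx)
    set v : Fin L.length → Fin d → ℝ :=
      fun j => (L.map fun i => (Pi.single i 1 : Fin d → ℝ)).getD (j : ℕ) 0 with hv
    have he : iterD f L =ᶠ[nhds x] fun y => iteratedFDerivWithin ℝ L.length f U y v := by
      filter_upwards [hU.mem_nhds hx] with y hy
      exact (ih rfl hy).symm
    simp only [iterD]
    rw [he.fderiv_eq, fderiv_continuousMultilinear_apply_const_apply hd]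
    congr 1

/-! ### Comparison with multi-index derivatives -/

/-- The coordinate indices, with multiplicities, of a multi-index. -/
def idxList (ν : Fin d → ℕ) : List (Fin d) :=
  (List.finRange d).flatMap fun i => List.replicate (ν i) i

lemma count_idxList (ν : Fin d → ℕ) (i : Fin d) : (idxList ν).count i = ν i := by
  simp only [idxList, List.count_flatMap, Function.comp_def, List.count_replicate]
  rw [← Fin.sum_univ_def]
  simp

lemma length_idxList (ν : Fin d → ℕ) : (idxList ν).length = ∑ i, ν i := by
  simp [idxList, Fin.sum_univ_def]

lemma mDirs_eq (ν : Fin d → ℕ) :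
    mDirs ν = (idxList ν).map fun i => (Pi.single i 1 : Fin d → ℝ) := by
  simp [mDirs, idxList, List.map_flatMap]

lemma pderivW_eq_iterD {U : Set (Fin d → ℝ)} (hU : IsOpen U) {f : (Fin d → ℝ) → ℝ}
    (hf : ContDiffOn ℝ ∞ f U) (ν : Fin d → ℕ) {x : Fin d → ℝ} (hx : x ∈ U) :
    pderivW U f ν x = iterD f (idxList ν) x := by
  rw [pderivW, mDirs_eq]
  exact iteratedFDerivWithin_eq_iterD hU hf _ (length_idxList ν) hx

lemma iterD_eq_pderivW {U : Set (Fin d → ℝ)} (hU : IsOpen U) {f : (Fin d → ℝ) → ℝ}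
    (hf : ContDiffOn ℝ ∞ f U) (L : List (Fin d)) {x : Fin d → ℝ} (hx : x ∈ U) :
    iterD f L x = pderivW U f (fun i => L.count i) x := by
  rw [pderivW_eq_iterD hU hf _ hx]
  refine iterD_perm hU hf (List.perm_iff_count.2 fun i => ?_) hx
  rw [count_idxList]

lemma prod_pow_count (L : List (Fin d)) (u : Fin d → ℝ) :
    ∏ i, u i ^ L.count i = (L.map u).prod := by
  rw [Finset.prod_list_map_count]
  refine (Finset.prod_subset (Finset.subset_univ _) fun i _ hi => ?_).symm
  rw [List.mem_toFinset] at hi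
  rw [List.count_eq_zero_of_not_mem hi, pow_zero]

lemma sum_count (L : List (Fin d)) : ∑ i, L.count i = L.length := by
  rw [← List.sum_toFinset_count_eq_length]
  refine (Finset.sum_subset (Finset.subset_univ _) fun i _ hi => ?_).symm
  rw [List.mem_toFinset] at hi
  exact List.count_eq_zero_of_not_mem hi

lemma WeaklyMild.iterD_le {U : Set (Fin d → ℝ)} (hU : IsOpen U) {f : (Fin d → ℝ) → ℝ}
    {A B C : ℝ} (hf : WeaklyMild U f A B C) (L : List (Fin d)) {u : Fin d → ℝ} (hu : u ∈ U) :
    |iterD f L u| ≤ B ^ (C + 1) * A ^ L.length * (Nat.factorial L.length : ℝ) ^ (C + 1) /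
      (L.map u).prod := by
  have := hf.2 (fun i => L.count i) le_top u hu
  rwa [← iterD_eq_pderivW hU hf.1 L hu, sum_count, prod_pow_count] at this

/-- Using mildness of `∂ᵢ f` gains one factor `uᵢ` over the estimate given by mildness of `f`
for every derivative that involves `∂ᵢ`. -/
lemma iterD_le_of_mem {U : Set (Fin d → ℝ)} (hU : IsOpen U)
    (hUsub : U ⊆ {x | ∀ i, x i ∈ Ioo (0 : ℝ) 1}) {f : (Fin d → ℝ) → ℝ} {A B C : ℝ}
    (hA : 1 ≤ A) (hB : 0 < B) (hC : 0 ≤ C) (hf : ContDiffOn ℝ ∞ f U) {i : Fin d}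
    (hf' : WeaklyMild U (pderivW U f (Pi.single i 1)) A B C) {L : List (Fin d)} (hi : i ∈ L)
    {u : Fin d → ℝ} (hu : u ∈ U) :
    (L.map u).prod * |iterD f L u| ≤
      B ^ (C + 1) * A ^ L.length * (Nat.factorial L.length : ℝ) ^ (C + 1) * u i := by
  have hperm : L.Perm (i :: L.erase i) := List.perm_cons_erase hi
  have hperm' : L.Perm (L.erase i ++ [i]) := hperm.trans (List.perm_append_singleton i _).symm
  have h1 : EqOn (iterD f [i]) (pderivW U f (Pi.single i 1)) U := by
    intro x hx
    rw [iterD_eq_pderivW hU hf _ hx]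
    congr 1
    ext j
    by_cases h : j = i
    · subst h; simp
    · simp [h, Ne.symm h]
  have h2 : iterD f L u = iterD (pderivW U f (Pi.single i 1)) (L.erase i) u := by
    rw [iterD_perm hU hf hperm' hu, iterD_append, iterD_congr hU h1 _ hu]
  have hpos : ∀ j, 0 < u j := fun j => (hUsub hu j).1
  have hP : 0 < ((L.erase i).map u).prod := List.prod_pos (by simp; intros; exact hpos _)
  have h3 := hf'.iterD_le hU (L.erase i) hu
  rw [← h2, le_div_iff₀ hP] at h3
  have hlen : (L.erase i).length ≤ L.length := List.length_erase_le
  rw [(hperm.map u).prod_eq, List.map_cons, List.prod_cons]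
  calc u i * ((L.erase i).map u).prod * |iterD f L u|
      = (|iterD f L u| * ((L.erase i).map u).prod) * u i := by ring
    _ ≤ (B ^ (C + 1) * A ^ (L.erase i).length *
          (Nat.factorial (L.erase i).length : ℝ) ^ (C + 1)) * u i := by
        gcongr; exact (hpos i).le
    _ ≤ _ := by
        have := (hpos i).le
        gcongr

/-! ### Chain rule for the power substitution -/

/-- The terms of the expansion of an iterated derivative of `f ∘ powMap n` along `M`: a pair
`(c, L)` stands for `c * (φ(x)^L / x^M) * (∂_L f)(φ(x))`, where powers with a list as exponent
are products over the list. -/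
def chainTerms (n : Fin d → ℕ) : List (Fin d) → List (ℝ × List (Fin d))
  | [] => [(1, [])]
  | i :: M => (chainTerms n M).flatMap fun t =>
      [(t.1 * ((n i : ℝ) * t.2.count i - M.count i), t.2), (t.1 * n i, i :: t.2)]

lemma hasDerivAt_prod_line {g : ℝ → Fin d → ℝ} {x : Fin d → ℝ} {i : Fin d} {a : ℝ}
    (hg : HasDerivAt g (Pi.single i (a * x i)) 0) (hx : g 0 = x) (L : List (Fin d)) :
    HasDerivAt (fun t => (L.map (g t)).prod) (a * L.count i * (L.map x).prod) 0 := by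
  induction L with
  | nil => simpa using hasDerivAt_const (0 : ℝ) (1 : ℝ)
  | cons j L ih =>
    have hj := (hasDerivAt_pi.1 hg) j
    simp only [List.map_cons, List.prod_cons]
    refine (hj.fun_mul ih).congr_deriv ?_
    rw [hx]
    by_cases h : j = i
    · subst h; simp; ring
    · simp [h]; ring

lemma hasDerivAt_line (x : Fin d → ℝ) (i : Fin d) :
    HasDerivAt (fun t : ℝ => x + t • (Pi.single i 1 : Fin d → ℝ)) (Pi.single i 1) 0 := by
  simpa using ((hasDerivAt_id (0 : ℝ)).smul_const (Pi.single i 1 : Fin d → ℝ)).const_add x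

lemma hasDerivAt_powMap_line (n : Fin d → ℕ) {x : Fin d → ℝ} {i : Fin d} (hx : x i ≠ 0)
    (hn : n i ≠ 0) :
    HasDerivAt (fun t : ℝ => powMap n (x + t • (Pi.single i 1 : Fin d → ℝ)))
      (Pi.single i (n i / x i * powMap n x i)) 0 := by
  refine hasDerivAt_pi.2 fun j => ?_
  have h := ((hasDerivAt_pi.1 (hasDerivAt_line x i)) j).fun_pow (n j)
  refine h.congr_deriv ?_
  by_cases hj : j = i
  · subst hj
    obtain ⟨m, hm⟩ := Nat.exists_eq_succ_of_ne_zero hn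
    simp [powMap, hm, pow_succ]
    field_simp
  · simp [hj]

lemma hasDerivAt_list_sum {α : Type*} (T : List α) {g : α → ℝ → ℝ} {g' : α → ℝ} {t : ℝ}
    (h : ∀ a ∈ T, HasDerivAt (g a) (g' a) t) :
    HasDerivAt (fun s => (T.map fun a => g a s).sum) (T.map g').sum t := by
  induction T with
  | nil => simpa using hasDerivAt_const t (0 : ℝ)
  | cons a T ih =>
    simp only [List.map_cons, List.sum_cons]
    exact (h a (by simp)).fun_add (ih fun b hb => h b (by simp [hb]))

/-- The chain rule for the power substitution, in the form of an explicit finite expansion. -/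
lemma iterD_comp_powMap {U V : Set (Fin d → ℝ)} (hU : IsOpen U) (hV : IsOpen V)
    {f : (Fin d → ℝ) → ℝ} (hf : ContDiffOn ℝ ∞ f U) {n : Fin d → ℕ} (hn : ∀ i, n i ≠ 0)
    (hVpos : ∀ x ∈ V, ∀ i, x i ≠ 0) (hVU : ∀ x ∈ V, powMap n x ∈ U)
    (hF : ContDiffOn ℝ ∞ (f ∘ powMap n) V) (M : List (Fin d)) {x : Fin d → ℝ} (hx : x ∈ V) :
    iterD (f ∘ powMap n) M x = ((chainTerms n M).map fun t =>
      t.1 * ((t.2.map (powMap n x)).prod / (M.map x).prod) * iterD f t.2 (powMap n x)).sum := by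
  induction M generalizing x with
  | nil => simp [chainTerms, iterD]
  | cons i M ih =>
    set l : ℝ → Fin d → ℝ := fun t => x + t • (Pi.single i 1 : Fin d → ℝ) with hl
    have hl0 : l 0 = x := by simp [hl]
    have hxi := hVpos x hx i
    have hdl : HasDerivAt l (Pi.single i 1) 0 := hasDerivAt_line x i
    have hdφ : HasDerivAt (fun t => powMap n (l t)) (Pi.single i (n i / x i * powMap n x i)) 0 :=
      hasDerivAt_powMap_line n hxi (hn i)
    have h1 : HasDerivAt (fun t => iterD (f ∘ powMap n) M (l t))
        (iterD (f ∘ powMap n) (i :: M) x) 0 :=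
      HasFDerivAt.comp_hasDerivAt (f := l) 0
        (by rw [hl0]; exact (iterD_differentiableAt hV hF M hx).hasFDerivAt) hdl
    have hq0 : (M.map x).prod ≠ 0 := by
      refine List.prod_ne_zero fun h => ?_
      obtain ⟨j, -, hj⟩ := List.mem_map.1 h
      exact hVpos x hx j hj
    have hterm : ∀ t ∈ chainTerms n M, HasDerivAt
        (fun s => t.1 * ((t.2.map (powMap n (l s))).prod / (M.map (l s)).prod) *
          iterD f t.2 (powMap n (l s)))
        (t.1 * ((n i : ℝ) * t.2.count i - M.count i) *
            ((t.2.map (powMap n x)).prod / (x i * (M.map x).prod)) * iterD f t.2 (powMap n x) +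
          t.1 * n i * ((powMap n x i * (t.2.map (powMap n x)).prod) / (x i * (M.map x).prod)) *
            iterD f (i :: t.2) (powMap n x)) 0 := by
      rintro ⟨c, L⟩ -
      have hp := hasDerivAt_prod_line hdφ (by rw [hl0]) L
      have hq := hasDerivAt_prod_line (a := 1 / x i) (x := x) (i := i)
        (by rwa [one_div_mul_cancel hxi]) hl0 M
      have hg : HasDerivAt (fun s => iterD f L (powMap n (l s)))
          (n i / x i * powMap n x i * iterD f (i :: L) (powMap n x)) 0 := by
        have := HasFDerivAt.comp_hasDerivAt (f := fun t => powMap n (l t)) 0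
          (by rw [hl0]; exact (iterD_differentiableAt hU hf L (hVU x hx)).hasFDerivAt) hdφ
        refine this.congr_deriv ?_
        rw [← mul_one (n i / x i * powMap n x i), ← smul_eq_mul _ (1 : ℝ), Pi.single_smul, map_smul]
        simp [iterD]
      have hq0' : (M.map (l 0)).prod ≠ 0 := by rwa [hl0]
      refine (((hp.fun_div hq hq0').const_mul c).fun_mul hg).congr_deriv ?_
      simp only [hl0]
      field_simp
    have hsum := hasDerivAt_list_sum _ hterm
    have hev : (fun t => iterD (f ∘ powMap n) M (l t)) =ᶠ[nhds 0] fun s =>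
        ((chainTerms n M).map fun t => t.1 * ((t.2.map (powMap n (l s))).prod /
          (M.map (l s)).prod) * iterD f t.2 (powMap n (l s))).sum := by
      have : ∀ᶠ s in nhds (0 : ℝ), l s ∈ V :=
        hdl.continuousAt.eventually_mem (by rw [hl0]; exact hV.mem_nhds hx)
      filter_upwards [this] with s hs
      exact ih hs
    rw [h1.unique (hsum.congr_of_eventuallyEq hev)]
    simp only [chainTerms, List.map_flatMap]
    rw [List.flatMap_def, List.sum_flatten, List.map_map]
    simp [Function.comp_def]

/-! ### Estimates for the expansion -/

lemma chainTerms_length_le (n : Fin d → ℕ) (M : List (Fin d)) :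
    ∀ t ∈ chainTerms n M, t.2.length ≤ M.length := by
  induction M with
  | nil => simp [chainTerms]
  | cons i M ih =>
    intro t ht
    simp only [chainTerms, List.mem_flatMap] at ht
    obtain ⟨s, hs, ht⟩ := ht
    have := ih s hs
    simp only [List.mem_cons, List.not_mem_nil, or_false] at ht
    rcases ht with rfl | rfl <;> simp <;> omega

/-- Every index of `M` occurs in each term with nonzero coefficient. -/
lemma chainTerms_mem (n : Fin d → ℕ) (M : List (Fin d)) :
    ∀ t ∈ chainTerms n M, t.1 ≠ 0 → ∀ i ∈ M, i ∈ t.2 := by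
  induction M with
  | nil => simp
  | cons i M ih =>
    intro t ht h0 j hj
    simp only [chainTerms, List.mem_flatMap] at ht
    obtain ⟨s, hs, ht⟩ := ht
    simp only [List.mem_cons, List.not_mem_nil, or_false] at ht
    rcases ht with rfl | rfl
    · have hs0 : s.1 ≠ 0 := left_ne_zero_of_mul h0
      rcases List.mem_cons.1 hj with rfl | hj
      · by_contra hjs
        -- `j` occurs in neither list, so the coefficient `n j * 0 - 0` vanishes
        have hjM : j ∉ M := fun h => hjs (ih s hs hs0 j h)
        simp [List.count_eq_zero_of_not_mem hjs, List.count_eq_zero_of_not_mem hjM] at h0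
      · exact ih s hs hs0 j hj
    · have hs0 : s.1 ≠ 0 := left_ne_zero_of_mul h0
      rcases List.mem_cons.1 hj with rfl | hj
      · simp
      · exact List.mem_cons_of_mem _ (ih s hs hs0 j hj)

/-- The weighted sum of the coefficients grows by a factor at most
`N * (2 * |M| + 1) ≤ 2 * N * (|M| + 1)` at each differentiation. -/
lemma chainTerms_sum_le {n : Fin d → ℕ} {N : ℕ} (hN : ∀ i, n i ≤ N) (M : List (Fin d))
    (hM : ∀ i, M.length ≤ n i) :
    ((chainTerms n M).map fun t => |t.1| * (Nat.factorial t.2.length : ℝ)).sum ≤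
      (2 * N : ℝ) ^ M.length * Nat.factorial M.length := by
  induction M with
  | nil => simp [chainTerms]
  | cons i M ih =>
    have hM' : ∀ j, M.length ≤ n j := fun j => le_trans (by simp) (hM j)
    have hNi : (n i : ℝ) ≤ N := by exact_mod_cast hN i
    have key : ∀ t ∈ chainTerms n M,
        |t.1 * ((n i : ℝ) * t.2.count i - M.count i)| * (Nat.factorial t.2.length : ℝ) +
          |t.1 * n i| * (Nat.factorial (t.2.length + 1) : ℝ) ≤
        (|t.1| * (Nat.factorial t.2.length : ℝ)) * (2 * N * (M.length + 1)) := by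
      rintro ⟨c, L⟩ ht
      by_cases hc : c = 0
      · simp [hc]
      have hlen : (L.length : ℝ) ≤ M.length := by
        exact_mod_cast chainTerms_length_le n M _ ht
      have hcnt : (L.count i : ℝ) ≤ L.length := by exact_mod_cast List.count_le_length
      have hmem := chainTerms_mem n M _ ht hc
      have hnn : (M.count i : ℝ) ≤ n i * L.count i := by
        by_cases hi : i ∈ M
        · have h1 : 1 ≤ L.count i := List.one_le_count_iff.2 (hmem i hi)
          have h2 : M.count i ≤ n i := List.count_le_length.trans (hM' i)
          exact_mod_cast h2.trans (Nat.le_mul_of_pos_right _ h1)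
        · rw [List.count_eq_zero_of_not_mem hi]; push_cast; positivity
      have habs : |(n i : ℝ) * L.count i - M.count i| ≤ N * M.length := by
        rw [abs_of_nonneg (by linarith)]
        have : (n i : ℝ) * L.count i ≤ N * M.length := by
          gcongr ?_ * ?_; exact hcnt.trans hlen
        have : (0 : ℝ) ≤ M.count i := by positivity
        linarith
      simp only [abs_mul, Nat.factorial_succ, Nat.abs_cast]
      push_cast
      have e1 : |c| * |(n i : ℝ) * L.count i - M.count i| * (Nat.factorial L.length : ℝ) ≤
          |c| * (N * M.length) * (Nat.factorial L.length : ℝ) := by gcongr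
      have e2 : |c| * n i * ((L.length + 1) * (Nat.factorial L.length : ℝ)) ≤
          |c| * N * ((M.length + 1) * (Nat.factorial L.length : ℝ)) := by gcongr
      have e3 : 0 ≤ |c| * N * (Nat.factorial L.length : ℝ) := by positivity
      nlinarith
    simp only [chainTerms, List.map_flatMap]
    rw [List.flatMap_def, List.sum_flatten, List.map_map]
    simp only [Function.comp_def, List.map_cons, List.map_nil, List.sum_cons, List.sum_nil,
      add_zero, List.length_cons]
    refine (List.sum_le_sum key).trans ?_
    rw [List.sum_map_mul_right, Nat.factorial_succ, pow_succ]
    refine (mul_le_mul_of_nonneg_right (ih hM') (by positivity)).trans (le_of_eq ?_)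
    push_cast
    ring

lemma list_abs_sum_le {α : Type*} (T : List α) (g : α → ℝ) :
    |(T.map g).sum| ≤ (T.map fun a => |g a|).sum := by
  induction T with
  | nil => simp
  | cons a T ih =>
    simp only [List.map_cons, List.sum_cons]
    exact (abs_add_le _ _).trans (by gcongr)

/-- If `|M| ≤ r ≤ n j`, a lower bound `m ∈ [0, 1]` of the numbers `x j ^ n j`, `j ∈ M`, is at most
the product of the `x j`: the `r`-th power of this product is at least `m ^ |M| ≥ m ^ r`. -/
lemma min_le_prod {x : Fin d → ℝ} (hx : ∀ i, x i ∈ Ioo (0 : ℝ) 1) {n : Fin d → ℕ} {r : ℕ}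
    (hr : 0 < r) (hn : ∀ i, r ≤ n i) {M : List (Fin d)} (hM : M.length ≤ r) {m : ℝ}
    (hm0 : 0 ≤ m) (hm1 : m ≤ 1) (hm : ∀ j ∈ M, m ≤ powMap n x j) : m ≤ (M.map x).prod := by
  have hP : 0 ≤ (M.map x).prod := List.prod_nonneg (by
    simp only [List.mem_map]; rintro _ ⟨j, -, rfl⟩; exact (hx j).1.le)
  rw [← pow_le_pow_iff_left₀ hm0 hP hr.ne']
  refine (pow_le_pow_of_le_one hm0 hm1 hM).trans ?_
  clear hM
  induction M with
  | nil => simp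
  | cons j M ih =>
    simp only [List.map_cons, List.prod_cons, List.length_cons, pow_succ, mul_pow] at *
    have h1 : m ≤ x j ^ r := (hm j (by simp)).trans
      (pow_le_pow_of_le_one (hx j).1.le (hx j).2.le (hn j))
    have h2 := ih (fun k hk => hm k (by simp [hk])) (List.prod_nonneg (by
      simp only [List.mem_map]; rintro _ ⟨j, -, rfl⟩; exact (hx j).1.le))
    rw [mul_comm]
    exact mul_le_mul h1 h2 (by positivity) (pow_nonneg (hx j).1.le _)

end Auxiliary

/-- power substitution: if `f` and all its first-order partial derivatives are
weakly `(A,B,C)`-mild on `U ⊆ (0,1)^d` and `n_i ≥ r` for all `i`, then `f ∘ φ` is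
`(Ã,B,C)`-mild up to order `r` on `V = φ⁻¹(U)`, where `Ã = N·A·(d+1)^{C+1}` and
`N = max(n_1,…,n_d)`. -/
theorem power_substitution {d : ℕ} (U : Set (Fin d → ℝ)) (hU : IsOpen U)
    (hUsub : U ⊆ {x | ∀ i, x i ∈ Ioo (0 : ℝ) 1})
    (A B C : ℝ) (hA : 1 ≤ A) (hB : 0 < B) (hC : 0 ≤ C)
    (f : (Fin d → ℝ) → ℝ)
    (hf : WeaklyMild U f A B C)
    (hf' : ∀ i : Fin d, WeaklyMild U (pderivW U f (Pi.single i 1)) A B C)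
    (r : ℕ) (hr : 0 < r) (n : Fin d → ℕ) (hn : ∀ i, r ≤ n i) :
    MildUpTo r {x | (∀ i, x i ∈ Ioo (0 : ℝ) 1) ∧ powMap n x ∈ U}
      (f ∘ powMap n)
      (((Finset.univ.sup n : ℕ) : ℝ) * A * ((d : ℝ) + 1) ^ (C + 1)) B C := by
  set V : Set (Fin d → ℝ) := {x | (∀ i, x i ∈ Ioo (0 : ℝ) 1) ∧ powMap n x ∈ U} with hVdef
  have hφ : ContDiff ℝ ∞ (powMap n) :=
    contDiff_pi.2 fun i => (contDiff_apply ℝ ℝ i).pow (n i)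
  have hV : IsOpen V := by
    have h1 : IsOpen {x : Fin d → ℝ | ∀ i, x i ∈ Ioo (0 : ℝ) 1} := by
      simp only [ofPred_forall]
      exact isOpen_iInter_of_finite fun i => isOpen_Ioo.preimage (continuous_apply i)
    exact h1.inter (hU.preimage hφ.continuous)
  have hF : ContDiffOn ℝ ∞ (f ∘ powMap n) V := hf.1.comp hφ.contDiffOn fun x hx => hx.2
  refine ⟨hF.of_le (WithTop.coe_le_coe.2 le_top), fun ν hν x hx => ?_⟩
  rw [pderivW_eq_iterD hV hF ν hx, ← length_idxList]
  have hk : (idxList ν).length ≤ r := by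
    rw [length_idxList]; exact_mod_cast hν
  generalize idxList ν = M at hk
  set u := powMap n x with hu
  have hB' : 0 < B ^ (C + 1) := Real.rpow_pos_of_pos hB _
  rcases M.eq_nil_or_concat with hM0 | hM0
  · subst hM0
    have := hf.iterD_le hU [] hx.2
    simpa [iterD] using this
  have hne : M ≠ [] := by rintro rfl; simp at hM0
  clear hM0
  -- the index of `M` at which `u` is smallest
  obtain ⟨i, hiM, hmin⟩ := M.toFinset.exists_min_image u (by simpa using hne)
  simp only [List.mem_toFinset] at hiM hmin
  have hui := hUsub hx.2 i
  have hprod : u i ≤ (M.map x).prod :=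
    min_le_prod hx.1 hr hn hk hui.1.le hui.2.le hmin
  have hQ : 0 < (M.map x).prod := hui.1.trans_le hprod
  set N := Finset.univ.sup n with hN
  have hNle : ∀ i, n i ≤ N := fun i => Finset.le_sup (Finset.mem_univ i)
  set k := M.length with hkdef
  have hC1 : (0 : ℝ) ≤ C + 1 := by linarith
  have hterm : ∀ t ∈ chainTerms n M,
      |t.1 * ((t.2.map u).prod / (M.map x).prod) * iterD f t.2 u| ≤
      (B ^ (C + 1) * A ^ k * (Nat.factorial k : ℝ) ^ C) *
        (|t.1| * (Nat.factorial t.2.length : ℝ)) := by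
    rintro ⟨c, L⟩ ht
    by_cases hc : c = 0
    · simp [hc]
    have hlen : L.length ≤ k := chainTerms_length_le n M _ ht
    have hL := iterD_le_of_mem hU hUsub hA hB hC hf.1 (hf' i) (chainTerms_mem n M _ ht hc i hiM) hx.2
    have hP : 0 ≤ (L.map u).prod := List.prod_nonneg (by
      simp only [List.mem_map]; rintro _ ⟨j, -, rfl⟩; exact (hUsub hx.2 j).1.le)
    have hfact : (0 : ℝ) < Nat.factorial L.length := by exact_mod_cast Nat.factorial_pos _
    simp only [abs_mul, abs_div, abs_of_nonneg hP, abs_of_pos hQ]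
    calc |c| * ((L.map u).prod / (M.map x).prod) * |iterD f L u|
        = |c| * ((L.map u).prod * |iterD f L u|) / (M.map x).prod := by ring
      _ ≤ |c| * (B ^ (C + 1) * A ^ L.length * (Nat.factorial L.length : ℝ) ^ (C + 1) * u i) /
            (M.map x).prod := by gcongr
      _ = |c| * (B ^ (C + 1) * A ^ L.length * (Nat.factorial L.length : ℝ) ^ (C + 1)) *
            (u i / (M.map x).prod) := by ring
      _ ≤ |c| * (B ^ (C + 1) * A ^ L.length * (Nat.factorial L.length : ℝ) ^ (C + 1)) * 1 := by
          gcongr; exact (div_le_one hQ).2 hprod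
      _ = (B ^ (C + 1) * A ^ L.length * (Nat.factorial L.length : ℝ) ^ C) *
            (|c| * (Nat.factorial L.length : ℝ)) := by
          rw [Real.rpow_add_one hfact.ne']; ring
      _ ≤ _ := by gcongr
  -- the index `i` witnesses `1 ≤ d`
  have hd : (1 : ℝ) ≤ d := by exact_mod_cast i.pos
  have h2 : (2 : ℝ) ≤ ((d : ℝ) + 1) ^ (C + 1) := by
    calc (2 : ℝ) ≤ (d : ℝ) + 1 := by linarith
      _ = ((d : ℝ) + 1) ^ (1 : ℝ) := (Real.rpow_one _).symm
      _ ≤ _ := Real.rpow_le_rpow_of_exponent_le (by linarith) (by linarith)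
  have hfk : (0 : ℝ) < Nat.factorial k := by exact_mod_cast Nat.factorial_pos _
  rw [iterD_comp_powMap hU hV hf.1 (fun i => (hr.trans_le (hn i)).ne')
    (fun x hx i => (hx.1 i).1.ne') (fun x hx => hx.2) hF M hx]
  calc _ ≤ _ := list_abs_sum_le _ _
    _ ≤ _ := List.sum_le_sum hterm
    _ = (B ^ (C + 1) * A ^ k * (Nat.factorial k : ℝ) ^ C) *
          ((chainTerms n M).map fun t => |t.1| * (Nat.factorial t.2.length : ℝ)).sum :=
        List.sum_map_mul_left _ _ _
    _ ≤ (B ^ (C + 1) * A ^ k * (Nat.factorial k : ℝ) ^ C) *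
          ((2 * N : ℝ) ^ k * Nat.factorial k) := by
        gcongr
        exact chainTerms_sum_le hNle M fun j => hk.trans (hn j)
    _ = B ^ (C + 1) * (N * A * 2) ^ k * (Nat.factorial k : ℝ) ^ (C + 1) := by
        rw [Real.rpow_add_one hfk.ne', mul_pow, mul_pow, mul_pow]; ring
    _ ≤ _ := by gcongr
end
end

section
/- Rescaling a mild function to bounded C^r-norm: Suppose f : U → [-1,1], with U ⊂ (0,1)^d open, is (A,C)-mild up to order r for an integer r > 0, A > 0 and C ≥ 0. Let P = (P_1,…,P_d) ∈ (0,1)^d and define ψ(x_1,…,x_d) = (x_1/(A r^C) + P_1, …, x_d/(A r^C) + P_d). If V = ψ^{-1}(U), then the composition f ∘ ψ : V → [-1,1] has C^r-norm at most 1. -/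
/-!
The map `ψ` is a translation composed with multiplication by `1 / (A r^C)`, so the chain rule
gives `(f ∘ ψ)^{(ν)} = (A r^C)^{-n} (f^{(ν)} ∘ ψ)` with `n = |ν|` (`pderivW_comp_rescaleMap`).
Mildness with `B ≤ 1` bounds `f^{(ν)}` by `A^n (n!)^{C+1}`, and for `n ≤ r` one has
`n! ≤ n^n ≤ r^n`, hence `(n!)^{C+1} ≤ (r^C)^n n!` (`factorial_rpow_succ_le`). The powers of `A`
and of `r^C` cancel, leaving `n!`.
-/

open Set

noncomputable section

/-- The rescaling map `ψ(x) = (x_1/(A r^C) + P_1, …, x_d/(A r^C) + P_d)`. -/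
def rescaleMap {d : ℕ} (A C : ℝ) (r : ℕ) (P : Fin d → ℝ) : (Fin d → ℝ) → (Fin d → ℝ) :=
  fun x i => x i / (A * (r : ℝ) ^ C) + P i

/-- Since `ψ` is affine with scalar linear part, each of the `|ν|` directional derivatives
of `f ∘ ψ` contributes one factor `1 / (A r^C)`. -/
lemma pderivW_comp_rescaleMap {d : ℕ} {U : Set (Fin d → ℝ)} (hU : IsOpen U)
    {r : ℕ} {A C : ℝ} (hK : A * (r : ℝ) ^ C ≠ 0) (f : (Fin d → ℝ) → ℝ) (P : Fin d → ℝ)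
    (ν : Fin d → ℕ) {x : Fin d → ℝ} (hx : x ∈ rescaleMap A C r P ⁻¹' U) :
    pderivW (rescaleMap A C r P ⁻¹' U) (f ∘ rescaleMap A C r P) ν x =
      ((A * (r : ℝ) ^ C)⁻¹) ^ (∑ i, ν i) * pderivW U f ν (rescaleMap A C r P x) := by
  -- `ψ` factors as the linear homothety `g` followed by the translation by `P`.
  let g : (Fin d → ℝ) ≃L[ℝ] (Fin d → ℝ) :=
    ContinuousLinearEquiv.smulLeft (Units.mk0 _ (inv_ne_zero hK))
  have hg : ∀ y, g y = (A * (r : ℝ) ^ C)⁻¹ • y := fun y => rfl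
  have hψ : rescaleMap A C r P = fun y => g y + P := by
    funext y i
    simp [rescaleMap, hg, div_eq_inv_mul]
  have hcont : Continuous fun y : Fin d → ℝ => y + P := by fun_prop
  have hW : IsOpen ((fun y : Fin d → ℝ => y + P) ⁻¹' U) := hU.preimage hcont
  have hxU : g x + P ∈ U := by simpa [hψ] using hx
  have hcomp := g.iteratedFDerivWithin_comp_right (fun y => f (y + P)) hW.uniqueDiffOn
    (x := x) hxU (∑ i, ν i)
  have htrans : iteratedFDerivWithin ℝ (∑ i, ν i) (fun y => f (y + P))
      ((fun y : Fin d → ℝ => y + P) ⁻¹' U) (g x)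
      = iteratedFDerivWithin ℝ (∑ i, ν i) f U (g x + P) := by
    rw [iteratedFDerivWithin_of_isOpen _ hW hxU, iteratedFDerivWithin_of_isOpen _ hU hxU,
      iteratedFDeriv_comp_add_right]
  rw [htrans] at hcomp
  unfold pderivW
  rw [hψ]
  have happ := congrArg (fun m => m fun j => (mDirs ν).getD (j : ℕ) 0) hcomp
  refine happ.trans ?_
  simp only [ContinuousMultilinearMap.compContinuousLinearMap_apply,
    ContinuousLinearEquiv.coe_coe, hg]
  rw [ContinuousMultilinearMap.map_smul_univ]
  simp

/-- One factor `n!` is kept, and the remaining `(n!)^C` is absorbed by `(r^C)^n`. -/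
lemma factorial_rpow_succ_le {n r : ℕ} (hn : n ≤ r) {C : ℝ} (hC : 0 ≤ C) :
    (n.factorial : ℝ) ^ (C + 1) ≤ ((r : ℝ) ^ C) ^ n * n.factorial := by
  have hpos : (0 : ℝ) < n.factorial := by exact_mod_cast n.factorial_pos
  have hle : (n.factorial : ℝ) ≤ (r : ℝ) ^ n := by
    exact_mod_cast n.factorial_le_pow.trans (Nat.pow_le_pow_left hn n)
  rw [Real.rpow_add_one hpos.ne']
  gcongr
  calc (n.factorial : ℝ) ^ C ≤ ((r : ℝ) ^ n) ^ C := Real.rpow_le_rpow hpos.le hle hC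
    _ = ((r : ℝ) ^ C) ^ n := by
      rw [← Real.rpow_natCast, ← Real.rpow_natCast, ← Real.rpow_mul (Nat.cast_nonneg r),
        ← Real.rpow_mul (Nat.cast_nonneg r), mul_comm]

/-- rescaling an `(A,C)`-mild (up to order `r`) function `f : U → [-1,1]` by
`ψ` produces a function of `C^r`-norm at most `1` on `V = ψ⁻¹(U)`. -/
theorem rescale_Cr_norm {d : ℕ} (U : Set (Fin d → ℝ)) (hU : IsOpen U)
    (hUsub : U ⊆ {x | ∀ i, x i ∈ Ioo (0 : ℝ) 1})
    (r : ℕ) (hr : 0 < r) (A C : ℝ) (hA : 0 < A) (hC : 0 ≤ C)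
    (f : (Fin d → ℝ) → ℝ) (hrange : Set.MapsTo f U (Icc (-1 : ℝ) 1))
    (hf : ∃ B : ℝ, 0 < B ∧ B ≤ 1 ∧ MildUpTo r U f A B C)
    (P : Fin d → ℝ) (hP : ∀ i, P i ∈ Ioo (0 : ℝ) 1) :
    ∀ ν : Fin d → ℕ, (∑ i, ν i) ≤ r → ∀ x ∈ rescaleMap A C r P ⁻¹' U,
      |pderivW (rescaleMap A C r P ⁻¹' U) (f ∘ rescaleMap A C r P) ν x| ≤
        (Nat.factorial (∑ i, ν i) : ℝ) := by
  intro ν hν x hx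
  obtain ⟨B, hB0, hB1, -, hbound⟩ := hf
  have hrC : (0 : ℝ) < (r : ℝ) ^ C := Real.rpow_pos_of_pos (by exact_mod_cast hr) C
  have hK : 0 < A * (r : ℝ) ^ C := mul_pos hA hrC
  have hB : B ^ (C + 1) ≤ 1 := Real.rpow_le_one hB0.le hB1 (by linarith)
  have hmild := hbound ν (by exact_mod_cast hν) _ hx
  rw [pderivW_comp_rescaleMap hU hK.ne' f P ν hx, abs_mul,
    abs_of_pos (pow_pos (inv_pos.2 hK) _), inv_pow, inv_mul_le_iff₀ (pow_pos hK _)]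
  set n := ∑ i, ν i
  calc |pderivW U f ν (rescaleMap A C r P x)|
      ≤ B ^ (C + 1) * A ^ n * (n.factorial : ℝ) ^ (C + 1) := hmild
    _ ≤ 1 * A ^ n * (((r : ℝ) ^ C) ^ n * n.factorial) := by
      gcongr
      exact factorial_rpow_succ_le hν hC
    _ = (A * (r : ℝ) ^ C) ^ n * n.factorial := by ring
end
end

section
/- Bounded monomials are weakly mild: Let U ⊂ (0,1)^m be open and let b : U → ℝ be given by b(x) = a·x^μ = a·Π_{i=1}^m x_i^{μ_i} for some a ∈ ℝ and μ ∈ ℝ^m. If b is bounded on U, then b is weakly (M,B,0)-mild, where M = max(1,|μ_1|,…,|μ_m|) and B = sup_{x ∈ U} |b(x)|. -/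
/-!
The derivative `∂^ν` of `a * ∏ x_i ^ μ_i` is again a monomial, `c * ∏ x_i ^ (μ_i - ν_i)`. Taking the
partial derivatives one at a time, the derivative in direction `i` after `n` earlier ones multiplies
the coefficient by `μ_i - k`, where `k ≤ n` counts the earlier derivatives in direction `i`. As
`|μ_i - k| ≤ M + n ≤ M * (n + 1)`, this gives `|c| ≤ |a| * M ^ |ν| * |ν|!`
(`monomial_iteratedFDerivWithin`). Since `∏ x_i ^ (μ_i - ν_i) = (∏ x_i ^ μ_i) / x ^ ν`,
the bound `|a * ∏ x_i ^ μ_i| ≤ B` finishes the proof.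
-/


open Set

noncomputable section

lemma contDiffAt_monomial {m : ℕ} (ρ : Fin m → ℝ) (c : ℝ) (n : WithTop ℕ∞) {x : Fin m → ℝ}
    (hx : ∀ i, 0 < x i) : ContDiffAt ℝ n (fun x : Fin m → ℝ => c * ∏ i, x i ^ ρ i) x := by
  refine contDiffAt_const.mul (contDiffAt_prod fun i _ => ?_)
  exact (contDiff_apply ℝ ℝ i).contDiffAt.rpow_const_of_ne (hx i).ne'

lemma fderiv_monomial {m : ℕ} (ρ : Fin m → ℝ) (c : ℝ) {x : Fin m → ℝ}
    (hx : ∀ i, 0 < x i) (i : Fin m) :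
    fderiv ℝ (fun x : Fin m → ℝ => c * ∏ j, x j ^ ρ j) x (Pi.single i 1) =
      c * ρ i * ∏ j, x j ^ (ρ j - if j = i then 1 else 0) := by
  have h1 : ∀ j ∈ (Finset.univ : Finset (Fin m)), HasFDerivAt (fun y : Fin m → ℝ => y j ^ ρ j)
      ((ρ j * x j ^ (ρ j - 1)) • (ContinuousLinearMap.proj j : (Fin m → ℝ) →L[ℝ] ℝ)) x :=
    fun j _ => (hasFDerivAt_apply j x).rpow_const (Or.inl (hx j).ne')
  have h2 := (HasFDerivAt.finsetProd h1).const_mul c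
  rw [h2.fderiv]
  simp only [smul_apply, sum_apply,
    ContinuousLinearMap.proj_apply, smul_eq_mul, Pi.single_apply]
  rw [Finset.sum_eq_single i (by intro j _ hj; simp [hj]) (by simp),
    ← Finset.mul_prod_erase Finset.univ (fun j => x j ^ (ρ j - if j = i then 1 else 0))
      (Finset.mem_univ i)]
  have h3 : ∏ j ∈ Finset.univ.erase i, x j ^ (ρ j - if j = i then (1 : ℝ) else 0) =
      ∏ j ∈ Finset.univ.erase i, x j ^ ρ j :=
    Finset.prod_congr rfl fun j hj => by simp [Finset.ne_of_mem_erase hj]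
  rw [h3]
  simp only [if_true]
  ring

/-- The iterated derivative along the coordinate directions listed in `l` is a monomial with
exponents `μ i - l.count i`, and its coefficient `c` does not depend on the point. -/
lemma monomial_iteratedFDerivWithin {m : ℕ} (U : Set (Fin m → ℝ)) (hU : IsOpen U)
    (hpos : ∀ x ∈ U, ∀ i, 0 < x i) (a : ℝ) (μ : Fin m → ℝ) (M : ℝ)
    (hM1 : 1 ≤ M) (hM : ∀ i, |μ i| ≤ M) (l : List (Fin m)) :
    ∃ c : ℝ, |c| ≤ |a| * M ^ l.length * (l.length.factorial : ℝ) ∧ ∀ x ∈ U,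
      iteratedFDerivWithin ℝ l.length (fun x : Fin m → ℝ => a * ∏ i, x i ^ μ i) U x
        (fun j => (l.map fun i => (Pi.single i 1 : Fin m → ℝ)).getD (j : ℕ) 0) =
      c * ∏ i, x i ^ (μ i - l.count i) := by
  induction l with
  | nil => exact ⟨a, by simp, fun x _ => by simp⟩
  | cons i l ih =>
    obtain ⟨c, hc, hd⟩ := ih
    refine ⟨c * (μ i - l.count i), ?_, fun x hx => ?_⟩
    · have h0 : (l.count i : ℝ) ≤ l.length := by exact_mod_cast List.count_le_length
      have h1 : |μ i - l.count i| ≤ M * (l.length + 1) := by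
        calc |μ i - l.count i| ≤ |μ i| + |(l.count i : ℝ)| := abs_sub _ _
          _ ≤ M + l.length := by
            rw [Nat.abs_cast]
            exact add_le_add (hM i) h0
          _ ≤ M * (l.length + 1) := by
            nlinarith [(Nat.cast_nonneg l.length : (0 : ℝ) ≤ l.length)]
      rw [abs_mul]
      calc |c| * |μ i - l.count i|
          ≤ (|a| * M ^ l.length * (l.length.factorial : ℝ)) * (M * (l.length + 1)) :=
            mul_le_mul hc h1 (abs_nonneg _) (by positivity)
        _ = _ := by
            rw [List.length_cons, Nat.factorial_succ]
            push_cast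
            ring
    · have hcd : ContDiffOn ℝ (⊤ : ℕ∞) (fun x : Fin m → ℝ => a * ∏ i, x i ^ μ i) U :=
        fun y hy => (contDiffAt_monomial μ a _ (hpos y hy)).contDiffWithinAt
      have hdiff := hcd.differentiableOn_iteratedFDerivWithin (m := l.length)
        (by exact_mod_cast WithTop.coe_lt_top _) hU.uniqueDiffOn x hx
      change iteratedFDerivWithin ℝ (l.length + 1) _ U x _ = _
      rw [iteratedFDerivWithin_succ_apply_left]
      -- Evaluation on the fixed remaining directions commutes with differentiation in `x`.
      have key : fderivWithin ℝ (fun y => iteratedFDerivWithin ℝ l.length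
          (fun x : Fin m → ℝ => a * ∏ i, x i ^ μ i) U y
          (fun j => (l.map fun i => (Pi.single i 1 : Fin m → ℝ)).getD (j : ℕ) 0)) U x
          (Pi.single i 1) = fderivWithin ℝ (iteratedFDerivWithin ℝ l.length
          (fun x : Fin m → ℝ => a * ∏ i, x i ^ μ i) U) U x (Pi.single i 1)
          (fun j => (l.map fun i => (Pi.single i 1 : Fin m → ℝ)).getD (j : ℕ) 0) := by
        exact fderivWithin_continuousMultilinear_apply_const_apply (hU.uniqueDiffWithinAt hx)
          hdiff _ _
      have key2 := fderivWithin_congr (𝕜 := ℝ) (s := U) (x := x) hd (hd x hx)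
      rw [key2, fderivWithin_of_isOpen hU hx, fderiv_monomial _ _ (hpos x hx)] at key
      refine Eq.trans ?_ (key.symm.trans ?_)
      · rfl
      · congr 1
        refine Finset.prod_congr rfl fun j _ => ?_
        congr 1
        rw [List.count_cons]
        by_cases hj : j = i
        · subst hj
          simp
          ring
        · simp [hj, Ne.symm hj]

/-- a bounded monomial `b(x) = a·x^μ` on an open `U ⊆ (0,1)^m` is weakly
`(M,B,0)`-mild, where `M = max(1,|μ_1|,…,|μ_m|)` and `B` is the sup of `|b|` on `U`. -/
theorem monomial_weaklyMild {m : ℕ} (U : Set (Fin m → ℝ)) (hU : IsOpen U)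
    (hUsub : U ⊆ {x | ∀ i, x i ∈ Ioo (0 : ℝ) 1})
    (a : ℝ) (μ : Fin m → ℝ) (M B : ℝ)
    (hM1 : 1 ≤ M) (hM : ∀ i, |μ i| ≤ M)
    (hB : 0 < B) (hBb : ∀ x ∈ U, |a * ∏ i, x i ^ μ i| ≤ B) :
    WeaklyMild U (fun x => a * ∏ i, x i ^ μ i) M B 0 := by
  have hpos : ∀ x ∈ U, ∀ i, 0 < x i := fun x hx i => (hUsub hx i).1
  refine ⟨fun x hx => (contDiffAt_monomial μ a _ (hpos x hx)).contDiffWithinAt,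
    fun ν _ x hx => ?_⟩
  set l : List (Fin m) := (List.finRange m).flatMap fun i => List.replicate (ν i) i with hl
  have hdirs : mDirs ν = l.map fun i => (Pi.single i 1 : Fin m → ℝ) := by
    simp [mDirs, hl, List.map_flatMap]
  have hlen : ∑ i, ν i = l.length := by
    simp [hl, List.length_flatMap, Fin.sum_univ_def]
  have hcount : ∀ i, l.count i = ν i := by
    intro i
    rw [hl, List.count_flatMap, ← Fin.sum_univ_def]
    simp [List.count_replicate]
  obtain ⟨c, hc, hd⟩ := monomial_iteratedFDerivWithin U hU hpos a μ M hM1 hM l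
  have hval : pderivW U (fun x => a * ∏ i, x i ^ μ i) ν x =
      c * ∏ i, x i ^ (μ i - l.count i) := by
    rw [← hd x hx, pderivW, hdirs]
    generalize ∑ i, ν i = n at hlen
    subst hlen
    rfl
  have hP : 0 < ∏ i, x i ^ ν i := Finset.prod_pos fun i _ => pow_pos (hpos x hx i) _
  have hQ : 0 < ∏ i, x i ^ μ i :=
    Finset.prod_pos fun i _ => Real.rpow_pos_of_pos (hpos x hx i) _
  have hsplit : ∏ i, x i ^ (μ i - l.count i) = (∏ i, x i ^ μ i) / ∏ i, x i ^ ν i := by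
    rw [← Finset.prod_div_distrib]
    refine Finset.prod_congr rfl fun i _ => ?_
    rw [hcount, Real.rpow_sub (hpos x hx i), Real.rpow_natCast]
  have hb := hBb x hx
  rw [abs_mul, abs_of_pos hQ] at hb
  rw [hval, hsplit, hlen, ← mul_div_assoc, abs_div, abs_of_pos hP, abs_mul, abs_of_pos hQ,
    zero_add, Real.rpow_one, Real.rpow_one]
  refine div_le_div_of_nonneg_right ?_ hP.le
  calc |c| * ∏ i, x i ^ μ i
      ≤ (|a| * M ^ l.length * (l.length.factorial : ℝ)) * ∏ i, x i ^ μ i := by gcongr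
    _ = (|a| * ∏ i, x i ^ μ i) * (M ^ l.length * (l.length.factorial : ℝ)) := by ring
    _ ≤ B * (M ^ l.length * (l.length.factorial : ℝ)) := by gcongr
    _ = _ := by ring
end
end
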